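/- arXiv:2010.01529 — 2 statements merged into one kernel-verified Lean document; each statement's English description precedes it below -/
import Mathlib

section
/- Let φ̂ : [0,∞) → ℝ be Borel measurable with 2π ∫₀^∞ r³ φ̂(r)² dr = 1, let λ ∈ {0, −1, +1}, and let ψ ∈ C²_c(ℝ³). Then for all v, v_* ∈ ℝ³ with v ≠ v_* and all ε > 0, |L^ε_λ[ψ](v, v_*)| ≤ 16 ‖D²ψ‖_∞ / |v − v_*|, and also |L[ψ](v, v_*)| ≤ 16 ‖D²ψ‖_∞ / |v − v_*|. -/
/-!
Write `z = v - w`, `r = |z|` and `H = ‖D²ψ‖_∞`.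

**Quantum kernel.** Rotation by `π` about the axis `z` preserves the surface measure, the number
`z·ω`, and hence `B^ε_λ`. The integral therefore does not change if the collision difference
`ψ(v') + ψ(v'_*) - ψ(v) - ψ(w)` is replaced by half of its sum with its rotated copy. In that sum
the part of the first-order term orthogonal to `z` cancels, and the part along `z` is controlled
by the Lipschitz bound on `∇ψ`; the sum is at most `6 H min(|v - v'|², |v - v'_*|²)`
(`symm_diff_bound`, used for both transfers). Since `B ≤ 2 |z·ω| ε⁻⁴ (φ̂(|v - v'|/ε)² +
φ̂(|v - v'_*|/ε)²)` for every admissible `λ`, it remains to integrate `|z·ω| a² φ̂(a/ε)²` over the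
sphere for `a = |v - v'| = r |cos θ|` and for `a = |v - v'_*| = r sin θ`. In polar coordinates
(`lintegral_sphere_polar`) the substitution `ρ = a/ε` turns both into the normalised integral
`∫ ρ³ φ̂(ρ)² dρ`, each over the two halves of `(0, π)`, with value at most `2 ε⁴ / r`
(`sphere_integral_long`, `sphere_integral_perp`). Altogether `|L^ε_λ[ψ]| ≤ 12 H / r`.

**Landau kernel.** The `v`-divergence of `Π(z)(∇ψ(v) - ∇ψ(w))` equals
`Δψ(v) - D²ψ(v)(z, z)/r² - 2 ⟪z, ∇ψ(v) - ∇ψ(w)⟫/r²` (`landau_div_eq`), which is at most `6 H` in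
absolute value. The field is antisymmetric in `(v, w)`, so the `w`-divergence obeys the same bound,
and `|L[ψ]| ≤ 6 H / r`.
-/

open MeasureTheory Real Filter
open scoped RealInnerProductSpace Topology

noncomputable section

abbrev E3 := EuclideanSpace ℝ (Fin 3)

/-- Post-collisional velocity `v' = v − ((v−v_*)·ω)ω`. -/
noncomputable def vPost (v w ω : E3) : E3 := v - ⟪v - w, ω⟫ • ω

/-- Post-collisional velocity `v'_* = v_* + ((v−v_*)·ω)ω`. -/
noncomputable def vPostStar (v w ω : E3) : E3 := w + ⟪v - w, ω⟫ • ω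

/-- The quantum collision kernel `B^ε_λ(v−v_*, ω)` (Maxwell–Boltzmann case for `λ = 0`,
Fermi–Dirac/Bose–Einstein case for `λ = ∓1`). -/
noncomputable def Bker (φh : ℝ → ℝ) (lam ε : ℝ) (v w ω : E3) : ℝ :=
  if lam = 0 then
    (|⟪v - w, ω⟫| / ε ^ 4) *
      ((φh (‖v - vPost v w ω‖ / ε)) ^ 2 + (φh (‖v - vPostStar v w ω‖ / ε)) ^ 2)
  else
    (|⟪v - w, ω⟫| / ε ^ 4) *
      (φh (‖v - vPost v w ω‖ / ε) + lam * φh (‖v - vPostStar v w ω‖ / ε)) ^ 2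

/-- `L^ε_λ[ψ](v,v_*) = (1/2) ∫_{S²} B^ε_λ(v−v_*,ω)(ψ(v')+ψ(v'_*)−ψ(v)−ψ(v_*)) dω`,
where `dω` is the surface measure on the unit sphere (total mass `4π`). -/
noncomputable def Leps (φh : ℝ → ℝ) (lam ε : ℝ) (ψ : E3 → ℝ) (v w : E3) : ℝ :=
  (1 / 2) * ∫ ω : Metric.sphere (0 : E3) 1,
      Bker φh lam ε v w (ω : E3) *
        (ψ (vPost v w (ω : E3)) + ψ (vPostStar v w (ω : E3)) - ψ v - ψ w)
    ∂((volume : Measure E3).toSphere)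

/-- The projection `Π(z)u = u − (z·u/|z|²) z` onto `{z}^⊥`. -/
noncomputable def projPerp (z u : E3) : E3 := u - (⟪z, u⟫ / ‖z‖ ^ 2) • z

/-- The vector field `(v, v_*) ↦ Π(v−v_*)(∇ψ(v) − ∇ψ(v_*))`. -/
noncomputable def landauVF (ψ : E3 → ℝ) (v w : E3) : E3 :=
  projPerp (v - w) (gradient ψ v - gradient ψ w)

/-- The Landau kernel
`L[ψ](v,v_*) = (1/(2|v−v_*|)) (∇_v − ∇_{v_*}) · [Π(v−v_*)(∇ψ(v) − ∇ψ(v_*))]`. -/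
noncomputable def Llandau (ψ : E3 → ℝ) (v w : E3) : ℝ :=
  (1 / (2 * ‖v - w‖)) * ∑ i : Fin 3,
    (fderiv ℝ (fun u => landauVF ψ u w i) v (EuclideanSpace.single i 1) -
      fderiv ℝ (fun u => landauVF ψ v u i) w (EuclideanSpace.single i 1))


/-- `‖D²ψ‖_∞ = sup_u |D²ψ(u)|`. -/
noncomputable def hessSupNorm (ψ : E3 → ℝ) : ℝ :=
  ⨆ u : E3, ‖iteratedFDeriv ℝ 2 ψ u‖

section Helpers

open scoped ENNReal Pointwise

/-! ### Second-order bounds for the test function -/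

/-- Compact support makes the supremum in `hessSupNorm` a genuine one rather than the default
value `0` of an unbounded real supremum. -/
lemma hess_bddAbove {ψ : E3 → ℝ} (hψ : ContDiff ℝ 2 ψ) (hsupp : HasCompactSupport ψ) :
    BddAbove (Set.range fun u : E3 => ‖iteratedFDeriv ℝ 2 ψ u‖) := by
  obtain ⟨C, hC⟩ := (hsupp.iteratedFDeriv (𝕜 := ℝ) 2).exists_bound_of_continuous
    (hψ.continuous_iteratedFDeriv le_rfl)
  exact ⟨C, by rintro _ ⟨u, rfl⟩; exact hC u⟩

lemma norm_fderiv_fderiv_le {ψ : E3 → ℝ} (hψ : ContDiff ℝ 2 ψ) (hsupp : HasCompactSupport ψ)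
    (u : E3) : ‖fderiv ℝ (fderiv ℝ ψ) u‖ ≤ hessSupNorm ψ := by
  rw [← norm_iteratedFDeriv_one, norm_iteratedFDeriv_fderiv]
  exact le_ciSup (hess_bddAbove hψ hsupp) u

lemma hessSupNorm_nonneg (ψ : E3 → ℝ) : 0 ≤ hessSupNorm ψ :=
  Real.iSup_nonneg fun _ => norm_nonneg _

lemma differentiable_fderiv_of_C2 {ψ : E3 → ℝ} (hψ : ContDiff ℝ 2 ψ) :
    Differentiable ℝ (fderiv ℝ ψ) :=
  (hψ.fderiv_right (m := 1) (by norm_num)).differentiable (by norm_num)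

lemma norm_fderiv_sub_le {ψ : E3 → ℝ} (hψ : ContDiff ℝ 2 ψ) (hsupp : HasCompactSupport ψ)
    (x y : E3) : ‖fderiv ℝ ψ y - fderiv ℝ ψ x‖ ≤ hessSupNorm ψ * ‖y - x‖ :=
  convex_univ.norm_image_sub_le_of_norm_fderiv_le
    (fun u _ => differentiable_fderiv_of_C2 hψ u)
    (fun u _ => norm_fderiv_fderiv_le hψ hsupp u) (Set.mem_univ _) (Set.mem_univ _)

/-- First-order Taylor estimate, without the sharp factor `1/2`. -/
lemma taylor_bound {ψ : E3 → ℝ} (hψ : ContDiff ℝ 2 ψ) (hsupp : HasCompactSupport ψ)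
    (x h : E3) : |ψ (x + h) - ψ x - fderiv ℝ ψ x h| ≤ hessSupNorm ψ * ‖h‖ ^ 2 := by
  have key := (convex_segment x (x + h)).norm_image_sub_le_of_norm_fderiv_le' (𝕜 := ℝ)
    (f := ψ) (φ := fderiv ℝ ψ x) (C := hessSupNorm ψ * ‖h‖)
    (fun u _ => (hψ.differentiable (by norm_num)) u)
    (fun u hu => by
      refine (norm_fderiv_sub_le hψ hsupp x u).trans ?_
      have : ‖u - x‖ ≤ ‖h‖ := by
        simpa using norm_sub_le_of_mem_segment hu
      exact mul_le_mul_of_nonneg_left this (hessSupNorm_nonneg ψ))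
    (left_mem_segment ℝ x (x + h)) (right_mem_segment ℝ x (x + h))
  simpa [Real.norm_eq_abs, mul_assoc, sq] using key

/-- The collision difference added to its mirror image is quadratic in the transfer `p`.
The four Taylor remainders contribute `4`, and the first-order terms add up to
`-(Dψ(v) - Dψ(w))(p + q)`, where `p + q` is parallel to `v - w` with length `2 |p|² / |v - w|`;
the Lipschitz bound on `Dψ` compensates the factor `|v - w|⁻¹`, contributing `2`. -/
lemma symm_diff_bound {ψ : E3 → ℝ} (hψ : ContDiff ℝ 2 ψ) (hsupp : HasCompactSupport ψ)
    (v w p q : E3) (c : ℝ) (hpq : p + q = (2 * c) • (v - w)) (hn : ‖q‖ = ‖p‖)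
    (hc0 : 0 ≤ c) (hc : c * ‖v - w‖ ^ 2 = ‖p‖ ^ 2) :
    |(ψ (v - p) + ψ (w + p) - ψ v - ψ w) + (ψ (v - q) + ψ (w + q) - ψ v - ψ w)|
      ≤ 6 * hessSupNorm ψ * ‖p‖ ^ 2 := by
  have h1 := taylor_bound hψ hsupp v (-p)
  have h2 := taylor_bound hψ hsupp v (-q)
  have h3 := taylor_bound hψ hsupp w p
  have h4 := taylor_bound hψ hsupp w q
  simp only [norm_neg, hn, ← sub_eq_add_neg] at h1 h2 h3 h4
  have h5 : |(fderiv ℝ ψ v - fderiv ℝ ψ w) (p + q)| ≤ 2 * (hessSupNorm ψ * ‖p‖ ^ 2) := by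
    rw [← Real.norm_eq_abs]
    refine ((fderiv ℝ ψ v - fderiv ℝ ψ w).le_opNorm (p + q)).trans ?_
    have h6 := norm_fderiv_sub_le hψ hsupp w v
    have h7 : ‖p + q‖ = 2 * c * ‖v - w‖ := by
      rw [hpq, norm_smul, Real.norm_of_nonneg (by positivity)]
    rw [h7, ← hc]
    calc _ ≤ (hessSupNorm ψ * ‖v - w‖) * (2 * c * ‖v - w‖) := by gcongr
      _ = _ := by ring
  simp only [map_neg, map_add, sub_apply] at h1 h2 h3 h4 h5
  rw [abs_le] at *
  constructor <;> linarith [h1.1, h1.2, h2.1, h2.2, h3.1, h3.2, h4.1, h4.2, h5.1, h5.2]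

/-! ### The Landau kernel -/

/-- The divergence in `v` of `Π(v - w)(∇ψ(v) - ∇ψ(w))`. With `z = v - w` and
`q = ⟪z, ∇ψ(v) - ∇ψ(w)⟫ / |z|²`, the field is `∇ψ(v) - ∇ψ(w) - q z`, so its divergence is
`Δψ(v) - 3 q - ∂_z q`, and `∂_z q = D²ψ(v)(z, z) / |z|² - q` because the denominator is
homogeneous of degree `2`. -/
lemma landau_div_eq {ψ : E3 → ℝ} (hψ : ContDiff ℝ 2 ψ) (v w : E3) (hvw : v ≠ w) :
    ∑ i : Fin 3, fderiv ℝ (fun u => landauVF ψ u w i) v (EuclideanSpace.single i 1) =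
      ∑ i : Fin 3, fderiv ℝ (fderiv ℝ ψ) v (EuclideanSpace.single i 1) (EuclideanSpace.single i 1)
      - fderiv ℝ (fderiv ℝ ψ) v (v - w) (v - w) / ‖v - w‖ ^ 2
      - 2 * ((fderiv ℝ ψ v - fderiv ℝ ψ w) (v - w) / ‖v - w‖ ^ 2) := by
  have hz : ‖v - w‖ ^ 2 ≠ 0 := by simpa [sub_eq_zero] using hvw
  have hgrad : ∀ u x : E3, ⟪x, gradient ψ u⟫ = fderiv ℝ ψ u x := by
    intro u x
    rw [real_inner_comm]
    simp [gradient]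
  have hD : HasFDerivAt (fderiv ℝ ψ) (fderiv ℝ (fderiv ℝ ψ) v) v :=
    (differentiable_fderiv_of_C2 hψ v).hasFDerivAt
  have hsub : HasFDerivAt (fun u : E3 => u - w) (ContinuousLinearMap.id ℝ E3) v :=
    (hasFDerivAt_id v).sub_const w
  have hnum := (hD.sub_const (fderiv ℝ ψ w)).clm_apply hsub
  have hden := hsub.norm_sq
  have hinv := (hasDerivAt_inv hz).comp_hasFDerivAt v hden
  -- `Q` is the derivative of the coefficient `q`; only its value in the direction `z` matters.
  obtain ⟨Q, hQ, hQz⟩ : ∃ Q : E3 →L[ℝ] ℝ,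
      HasFDerivAt (fun u => (fderiv ℝ ψ u - fderiv ℝ ψ w) (u - w) / ‖u - w‖ ^ 2) Q v ∧
      Q (v - w) = fderiv ℝ (fderiv ℝ ψ) v (v - w) (v - w) / ‖v - w‖ ^ 2
        - (fderiv ℝ ψ v - fderiv ℝ ψ w) (v - w) / ‖v - w‖ ^ 2 := by
    refine ⟨_, hnum.mul hinv, ?_⟩
    simp [-map_sub, -inner_self_eq_norm_sq_to_K, real_inner_self_eq_norm_sq]
    field_simp
    ring
  have hcomp : ∀ i : Fin 3, fderiv ℝ (fun u => landauVF ψ u w i) v (EuclideanSpace.single i 1) =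
      fderiv ℝ (fderiv ℝ ψ) v (EuclideanSpace.single i 1) (EuclideanSpace.single i 1)
      - (fderiv ℝ ψ v - fderiv ℝ ψ w) (v - w) / ‖v - w‖ ^ 2
      - (v - w) i * Q (EuclideanSpace.single i 1) := by
    intro i
    have hfun : (fun u => landauVF ψ u w i) = fun u =>
        (fderiv ℝ ψ u - fderiv ℝ ψ w) (EuclideanSpace.single i 1)
        - (fderiv ℝ ψ u - fderiv ℝ ψ w) (u - w) / ‖u - w‖ ^ 2 *
          ((EuclideanSpace.proj i : E3 →L[ℝ] ℝ) (u - w)) := by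
      funext u
      have hc : ∀ x : E3, x i = ⟪(EuclideanSpace.single i (1 : ℝ) : E3), x⟫ := by
        intro x; simp [EuclideanSpace.inner_single_left]
      simp only [landauVF, projPerp, inner_sub_right, hgrad, PiLp.sub_apply, PiLp.smul_apply,
        smul_eq_mul, sub_apply]
      rw [hc (gradient ψ u), hc (gradient ψ w), hgrad, hgrad]
      simp
    have h1 := (hD.sub_const (fderiv ℝ ψ w)).clm_apply
      (hasFDerivAt_const (EuclideanSpace.single i (1 : ℝ) : E3) v)
    have h2 : HasFDerivAt (fun u => (EuclideanSpace.proj i : E3 →L[ℝ] ℝ) (u - w)) _ v :=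
      (EuclideanSpace.proj i : E3 →L[ℝ] ℝ).hasFDerivAt.comp v hsub
    rw [hfun, HasFDerivAt.fderiv (h1.fun_sub (hQ.fun_mul h2))]
    simp
    ring
  have hQsum : Q (v - w) = ∑ i : Fin 3, (v - w) i * Q (EuclideanSpace.single i 1) := by
    conv_lhs => rw [← (EuclideanSpace.basisFun (Fin 3) ℝ).sum_repr (v - w)]
    simp only [map_sum, map_smul, smul_eq_mul, EuclideanSpace.basisFun_repr,
      EuclideanSpace.basisFun_apply]
  simp only [hcomp, Finset.sum_sub_distrib, ← hQsum, hQz]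
  simp
  ring

/-- The trace of `D²ψ` costs `3`, the two quotients cost `1` and `2`. -/
lemma landau_div_bound {ψ : E3 → ℝ} (hψ : ContDiff ℝ 2 ψ) (hsupp : HasCompactSupport ψ)
    (v w : E3) (hvw : v ≠ w) :
    |∑ i : Fin 3, fderiv ℝ (fun u => landauVF ψ u w i) v (EuclideanSpace.single i 1)|
      ≤ 6 * hessSupNorm ψ := by
  have hz : 0 < ‖v - w‖ := by simpa [sub_eq_zero] using hvw
  have hH := norm_fderiv_fderiv_le hψ hsupp v
  have hH0 := hessSupNorm_nonneg ψ
  have hq : ∀ x : E3, |fderiv ℝ (fderiv ℝ ψ) v x x| ≤ hessSupNorm ψ * ‖x‖ ^ 2 := by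
    intro x
    rw [← Real.norm_eq_abs]
    calc _ ≤ ‖fderiv ℝ (fderiv ℝ ψ) v‖ * ‖x‖ * ‖x‖ := ContinuousLinearMap.le_opNorm₂ _ _ _
      _ ≤ hessSupNorm ψ * ‖x‖ * ‖x‖ := by gcongr
      _ = _ := by ring
  have h1 : ∀ i : Fin 3, |fderiv ℝ (fderiv ℝ ψ) v (EuclideanSpace.single i 1)
      (EuclideanSpace.single i 1)| ≤ hessSupNorm ψ := by
    intro i; simpa using hq (EuclideanSpace.single i 1)
  have h2 : |fderiv ℝ (fderiv ℝ ψ) v (v - w) (v - w) / ‖v - w‖ ^ 2| ≤ hessSupNorm ψ := by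
    rw [abs_div, abs_of_nonneg (sq_nonneg ‖v - w‖), div_le_iff₀ (by positivity)]
    exact hq _
  have h3 : |(fderiv ℝ ψ v - fderiv ℝ ψ w) (v - w) / ‖v - w‖ ^ 2| ≤ hessSupNorm ψ := by
    rw [abs_div, abs_of_nonneg (sq_nonneg ‖v - w‖), div_le_iff₀ (by positivity),
      ← Real.norm_eq_abs]
    calc _ ≤ ‖fderiv ℝ ψ v - fderiv ℝ ψ w‖ * ‖v - w‖ := ContinuousLinearMap.le_opNorm _ _
      _ ≤ hessSupNorm ψ * ‖v - w‖ * ‖v - w‖ := by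
        gcongr; exact norm_fderiv_sub_le hψ hsupp w v
      _ = _ := by ring
  rw [landau_div_eq hψ v w hvw, Fin.sum_univ_three]
  have a0 := h1 0
  have a1 := h1 1
  have a2 := h1 2
  rw [abs_le] at *
  constructor <;> linarith [a0.1, a0.2, a1.1, a1.2, a2.1, a2.2, h2.1, h2.2, h3.1, h3.2]

lemma landau_bound {ψ : E3 → ℝ} (hψ : ContDiff ℝ 2 ψ) (hsupp : HasCompactSupport ψ)
    (v w : E3) (hvw : v ≠ w) : |Llandau ψ v w| ≤ 16 * hessSupNorm ψ / ‖v - w‖ := by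
  have hz : 0 < ‖v - w‖ := by simpa [sub_eq_zero] using hvw
  -- The field is antisymmetric, so the `w`-divergence is the `v`-divergence with the roles exchanged.
  have hanti : ∀ i : Fin 3, (fun u => landauVF ψ v u i) = fun u => -landauVF ψ u v i := by
    intro i; funext u
    have : landauVF ψ v u = -landauVF ψ u v := by
      unfold landauVF projPerp
      rw [← neg_sub u v, ← neg_sub (gradient ψ u) (gradient ψ v), norm_neg, inner_neg_neg]
      module
    simp [this]
  have h1 := landau_div_bound hψ hsupp v w hvw
  have h2 := landau_div_bound hψ hsupp w v hvw.symm
  unfold Llandau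
  simp only [hanti, fderiv_fun_neg, neg_apply, sub_neg_eq_add, Finset.sum_add_distrib]
  rw [abs_mul, abs_of_nonneg (by positivity), one_div, inv_mul_le_iff₀ (by positivity)]
  have hH0 := hessSupNorm_nonneg ψ
  calc _ ≤ 6 * hessSupNorm ψ + 6 * hessSupNorm ψ := (abs_add_le _ _).trans (add_le_add h1 h2)
    _ ≤ 32 * hessSupNorm ψ := by linarith
    _ = _ := by field_simp; ring

/-! ### Integration over the sphere -/

/-- A sphere integral as the integral over the unit ball of the `0`-homogeneous extension. -/
lemma lintegral_toSphere (g : E3 → ℝ≥0∞) (hg : Measurable g) :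
    ∫⁻ ω : Metric.sphere (0 : E3) 1, g ω ∂((volume : Measure E3).toSphere) =
      3 * ∫⁻ x in Metric.ball (0 : E3) 1, g (‖x‖⁻¹ • x) := by
  have hmp := (volume : Measure E3).measurePreserving_homeomorphUnitSphereProd
  let F : Metric.sphere (0 : E3) 1 × Set.Ioi (0 : ℝ) → ℝ≥0∞ :=
    fun p => g p.1 * (Set.Iio (⟨1, by simp⟩ : Set.Ioi (0 : ℝ))).indicator 1 p.2
  have hF : Measurable F :=
    (hg.comp (measurable_subtype_coe.comp measurable_fst)).mul
      ((measurable_one.indicator measurableSet_Iio).comp measurable_snd)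
  have h1 := hmp.lintegral_comp hF
  have h2 : ∫⁻ p, F p ∂((volume : Measure E3).toSphere.prod
      (Measure.volumeIoiPow (Module.finrank ℝ E3 - 1))) =
      (∫⁻ ω : Metric.sphere (0 : E3) 1, g ω ∂((volume : Measure E3).toSphere)) *
        ENNReal.ofReal (1 / 3) := by
    refine (lintegral_prod_mul (f := fun ω : Metric.sphere (0 : E3) 1 => g ω)
      (hg.comp measurable_subtype_coe).aemeasurable
      (measurable_one.indicator measurableSet_Iio).aemeasurable).trans ?_
    rw [lintegral_indicator_one measurableSet_Iio, Measure.volumeIoiPow_apply_Iio]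
    norm_num
  have h3 : ∫⁻ x, F (homeomorphUnitSphereProd E3 x) ∂((volume : Measure E3).comap Subtype.val) =
      ∫⁻ x in Metric.ball (0 : E3) 1, g (‖x‖⁻¹ • x) := by
    have h4 : ∀ x : ({0}ᶜ : Set E3), F (homeomorphUnitSphereProd E3 x) =
        (Metric.ball (0 : E3) 1).indicator (fun x => g (‖x‖⁻¹ • x)) x := by
      intro x
      simp only [F, homeomorphUnitSphereProd_apply_fst_coe]
      by_cases hx : ‖(x : E3)‖ < 1
      · rw [Set.indicator_of_mem, Set.indicator_of_mem] <;> simp [← Subtype.coe_lt_coe, hx]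
      · rw [Set.indicator_of_notMem, Set.indicator_of_notMem] <;>
          simp [← Subtype.coe_lt_coe] <;> simpa using hx
    simp_rw [h4]
    rw [lintegral_subtype_comap (measurableSet_singleton _).compl
      (fun x => (Metric.ball (0 : E3) 1).indicator (fun x => g (‖x‖⁻¹ • x)) x),
      restrict_compl_singleton, lintegral_indicator measurableSet_ball]
  rw [← h3, h1, h2, mul_comm, mul_assoc]
  have : ENNReal.ofReal (1 / 3) * 3 = 1 := by
    rw [← ENNReal.ofReal_ofNat, ← ENNReal.ofReal_mul (by norm_num)]
    norm_num
  rw [this, mul_one]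

/-- The surface measure is invariant under linear isometries. -/
lemma measurePreserving_sphere (R : E3 ≃ₗᵢ[ℝ] E3) :
    MeasurePreserving (fun ω : Metric.sphere (0 : E3) 1 =>
      (⟨R ω, by simp⟩ : Metric.sphere (0 : E3) 1))
      (volume : Measure E3).toSphere (volume : Measure E3).toSphere := by
  have hm : Measurable (fun ω : Metric.sphere (0 : E3) 1 =>
      (⟨R ω, by simp⟩ : Metric.sphere (0 : E3) 1)) := by
    apply Continuous.measurable
    fun_prop
  refine ⟨hm, ?_⟩
  ext s hs
  rw [Measure.map_apply hm hs, Measure.toSphere_apply' _ hs, Measure.toSphere_apply' _ (hm hs)]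
  congr 1
  have hR : MeasurePreserving R.toHomeomorph.toMeasurableEquiv volume volume := R.measurePreserving
  rw [← hR.measure_preimage_equiv (Set.Ioo (0 : ℝ) 1 • Set.image Subtype.val s)]
  congr 1
  ext x
  simp only [Set.mem_smul, Set.mem_image, Set.mem_preimage, Subtype.exists]
  constructor
  · rintro ⟨c, hc, _, ⟨y, hy, hys, rfl⟩, rfl⟩
    exact ⟨c, hc, R y, ⟨R y, by simpa using hy, hys, rfl⟩, by simp⟩
  · rintro ⟨c, hc, _, ⟨y, hy, hys, rfl⟩, hx⟩
    refine ⟨c, hc, R.symm y, ⟨R.symm y, by simpa using hy, by simpa using hys, rfl⟩, ?_⟩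
    apply R.injective
    simpa using hx

/-- A function of `|x|` and of the component of `x` along `z`, integrated in an orthonormal basis
whose first vector is `z / |z|`. -/
lemma ball_coords (f : ℝ → ℝ → ℝ≥0∞) (hf : Measurable (Function.uncurry f)) (z : E3) (hz : z ≠ 0) :
    ∫⁻ x : E3, f (⟪z, x⟫ / ‖z‖) ‖x‖ =
      ∫⁻ a : ℝ, ∫⁻ y : ℝ × ℝ, f a (√(a ^ 2 + (y.1 ^ 2 + y.2 ^ 2))) := by
  have hz' : ‖z‖ ≠ 0 := by simpa using hz
  obtain ⟨b, hb⟩ := Orthonormal.exists_orthonormalBasis_extension_of_card_eq (𝕜 := ℝ) (E := E3)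
    (ι := Fin 3) (by simp) (v := fun _ => ‖z‖⁻¹ • z) (s := {0}) (by
      constructor
      · rintro ⟨i, hi⟩; simp [norm_smul, hz']
      · rintro ⟨i, hi⟩ ⟨j, hj⟩ hij; simp at hi hj; subst hi hj; simp at hij)
  have hb0 : b 0 = ‖z‖⁻¹ • z := hb 0 (by simp)
  have hcoord : ∀ x : E3, f (⟪z, x⟫ / ‖z‖) ‖x‖ = f (b.repr x 0) ‖b.repr x‖ := by
    intro x
    rw [b.repr_apply_apply, hb0, inner_smul_left, LinearIsometryEquiv.norm_map]
    congr 1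
    simp; ring
  simp_rw [hcoord]
  have hG : Measurable (fun x : E3 => f (x 0) ‖x‖) :=
    hf.comp (Measurable.prodMk (by fun_prop) (by fun_prop))
  rw [b.measurePreserving_repr.lintegral_comp hG]
  have hm1 := (EuclideanSpace.volume_preserving_symm_measurableEquiv_toLp (Fin 3)).symm
  rw [← hm1.lintegral_comp hG]
  have hm2 := (volume_preserving_piFinSuccAbove (fun _ : Fin 3 => ℝ) 0).symm
  rw [← hm2.lintegral_comp_emb (MeasurableEquiv.measurableEmbedding _)]
  rw [Measure.volume_eq_prod, lintegral_prod]
  · refine lintegral_congr fun a => ?_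
    rw [← (volume_preserving_finTwoArrow ℝ).symm.lintegral_comp_emb (MeasurableEquiv.measurableEmbedding _)]
    refine lintegral_congr fun y => ?_
    simp [EuclideanSpace.norm_eq, Fin.sum_univ_three, MeasurableEquiv.piFinSuccAbove]
    rw [add_assoc]
  · exact (hG.comp ((MeasurableEquiv.measurable _).comp
      (MeasurableEquiv.measurable _))).aemeasurable

/-- The `ρ`-integral runs over all of `ℝ`; negative `ρ` contribute `0` since `ENNReal.ofReal`
truncates. This lets the result be combined with a second use of polar coordinates. -/
lemma radial_lintegral (h : ℝ → ℝ≥0∞) (hh : Measurable h) :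
    ∫⁻ y : ℝ × ℝ, h (y.1 ^ 2 + y.2 ^ 2) =
      ENNReal.ofReal (2 * π) * ∫⁻ ρ : ℝ, ENNReal.ofReal ρ * h (ρ ^ 2) := by
  rw [← lintegral_comp_polarCoord_symm]
  have h1 : ∀ p : ℝ × ℝ, (polarCoord.symm p).1 ^ 2 + (polarCoord.symm p).2 ^ 2 = p.1 ^ 2 := by
    intro p
    simp only [polarCoord_symm_apply]
    linear_combination p.1 ^ 2 * sin_sq_add_cos_sq p.2
  simp only [h1, polarCoord_target, smul_eq_mul]
  rw [Measure.volume_eq_prod, ← Measure.prod_restrict]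
  have := lintegral_prod_mul (μ := volume.restrict (Set.Ioi (0 : ℝ)))
    (ν := volume.restrict (Set.Ioo (-π) π)) (f := fun ρ => ENNReal.ofReal ρ * h (ρ ^ 2))
    (g := fun _ => 1) (by fun_prop) (by fun_prop)
  simp only [mul_one] at this
  rw [this, mul_comm]
  congr 1
  · rw [lintegral_one, Measure.restrict_apply_univ, Real.volume_Ioo]
    congr 1
    ring
  · rw [← lintegral_indicator measurableSet_Ioi]
    refine lintegral_congr fun ρ => ?_
    by_cases hρ : 0 < ρ
    · simp [hρ]
    · simp [hρ, ENNReal.ofReal_of_nonpos (not_lt.1 hρ)]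

/-- Integration of an axially symmetric function over the sphere, `θ` being the angle with `z`.
Spherical coordinates arise from two applications of planar polar coordinates: in the plane
orthogonal to `z`, then in the half plane spanned by the axial and radial coordinates. -/
lemma lintegral_sphere_polar (g : ℝ → ℝ≥0∞) (hg : Measurable g) (z : E3) (hz : z ≠ 0) :
    ∫⁻ ω : Metric.sphere (0 : E3) 1, g (⟪z, ω⟫ / ‖z‖) ∂((volume : Measure E3).toSphere) =
      ENNReal.ofReal (2 * π) * ∫⁻ θ in Set.Ioo 0 π, ENNReal.ofReal (sin θ) * g (cos θ) := by
  rw [lintegral_toSphere (fun x => g (⟪z, x⟫ / ‖z‖)) (hg.comp (by fun_prop)),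
    ← lintegral_indicator measurableSet_ball]
  let f : ℝ → ℝ → ℝ≥0∞ := fun a n => (Set.Iio (1 : ℝ)).indicator 1 n * g (a / n)
  have hf : Measurable (Function.uncurry f) :=
    ((measurable_one.indicator measurableSet_Iio).comp measurable_snd).mul
      (hg.comp (measurable_fst.div measurable_snd))
  have h1 : ∀ x : E3, (Metric.ball (0 : E3) 1).indicator
      (fun x => g (⟪z, ‖x‖⁻¹ • x⟫ / ‖z‖)) x = f (⟪z, x⟫ / ‖z‖) ‖x‖ := by
    intro x
    by_cases hx : ‖x‖ < 1
    · simp only [f]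
      rw [Set.indicator_of_mem (by simpa using hx), Set.indicator_of_mem (by simpa using hx)]
      rw [inner_smul_right, Pi.one_apply, one_mul]
      congr 1
      ring
    · simp only [f]
      rw [Set.indicator_of_notMem (by simpa using hx), Set.indicator_of_notMem (by simpa using hx),
        zero_mul]
  simp_rw [h1]
  rw [ball_coords f hf z hz]
  have hf' : Measurable fun p : ℝ × ℝ => f p.1 (√(p.1 ^ 2 + p.2 ^ 2)) :=
    hf.comp (Measurable.prodMk (by fun_prop) (by fun_prop))
  have h2 : ∀ a : ℝ, ∫⁻ y : ℝ × ℝ, f a (√(a ^ 2 + (y.1 ^ 2 + y.2 ^ 2))) =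
      ENNReal.ofReal (2 * π) * ∫⁻ ρ : ℝ, ENNReal.ofReal ρ * f a (√(a ^ 2 + ρ ^ 2)) := by
    intro a
    exact radial_lintegral (fun t => f a (√(a ^ 2 + t)))
      (hf.comp (Measurable.prodMk (by fun_prop) (by fun_prop)))
  simp_rw [h2]
  rw [lintegral_const_mul' _ _ ENNReal.ofReal_ne_top,
    ← lintegral_prod (fun p : ℝ × ℝ => ENNReal.ofReal p.2 * f p.1 (√(p.1 ^ 2 + p.2 ^ 2)))
      ((by fun_prop : Measurable _).mul hf').aemeasurable, ← Measure.volume_eq_prod,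
    ← lintegral_comp_polarCoord_symm]
  have h3 : ∀ p ∈ polarCoord.target, ENNReal.ofReal p.1 • (ENNReal.ofReal (polarCoord.symm p).2 *
      f (polarCoord.symm p).1 (√((polarCoord.symm p).1 ^ 2 + (polarCoord.symm p).2 ^ 2))) =
      (ENNReal.ofReal (p.1 ^ 2) * (Set.Iio (1 : ℝ)).indicator 1 p.1) *
        (ENNReal.ofReal (sin p.2) * g (cos p.2)) := by
    rintro ⟨R, θ⟩ hp
    have hR : 0 < R := hp.1
    have : √((R * cos θ) ^ 2 + (R * sin θ) ^ 2) = R := by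
      rw [show (R * cos θ) ^ 2 + (R * sin θ) ^ 2 = R ^ 2 by
        linear_combination R ^ 2 * sin_sq_add_cos_sq θ]
      exact sqrt_sq hR.le
    simp only [polarCoord_symm_apply, this, f, smul_eq_mul]
    rw [mul_div_cancel_left₀ _ hR.ne', ENNReal.ofReal_mul hR.le, sq, ENNReal.ofReal_mul hR.le]
    ring
  rw [setLIntegral_congr_fun polarCoord.open_target.measurableSet h3, polarCoord_target,
    Measure.volume_eq_prod, ← Measure.prod_restrict,
    lintegral_prod_mul
      (f := fun R => ENNReal.ofReal (R ^ 2) * (Set.Iio (1 : ℝ)).indicator 1 R)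
      (g := fun θ => ENNReal.ofReal (sin θ) * g (cos θ)) (by
      exact ((by fun_prop : Measurable _).mul
        (measurable_one.indicator measurableSet_Iio)).aemeasurable) (by fun_prop)]
  have h4 : ∫⁻ R in Set.Ioi (0 : ℝ), ENNReal.ofReal (R ^ 2) * (Set.Iio (1 : ℝ)).indicator 1 R =
      ENNReal.ofReal (1 / 3) := by
    have h5 : ∀ R : ℝ, ENNReal.ofReal (R ^ 2) * (Set.Iio (1 : ℝ)).indicator 1 R =
        (Set.Iio (1 : ℝ)).indicator (fun R => ENNReal.ofReal (R ^ 2)) R := by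
      intro R
      by_cases hR : R < 1 <;> simp [hR]
    simp_rw [h5]
    rw [lintegral_indicator measurableSet_Iio, Measure.restrict_restrict measurableSet_Iio,
      Set.inter_comm, Set.Ioi_inter_Iio, restrict_Ioo_eq_restrict_Ioc,
      ← ofReal_integral_eq_lintegral_ofReal, ← intervalIntegral.integral_of_le zero_le_one]
    · norm_num
    · exact (intervalIntegral.intervalIntegrable_pow 2).1
    · exact ae_of_all _ fun R => sq_nonneg R
  have h6 : ∫⁻ θ in Set.Ioo (-π) π, ENNReal.ofReal (sin θ) * g (cos θ) =
      ∫⁻ θ in Set.Ioo 0 π, ENNReal.ofReal (sin θ) * g (cos θ) := by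
    rw [← lintegral_indicator measurableSet_Ioo, ← lintegral_indicator measurableSet_Ioo]
    refine lintegral_congr fun θ => ?_
    by_cases h : θ ∈ Set.Ioo 0 π
    · rw [Set.indicator_of_mem h, Set.indicator_of_mem
        (show θ ∈ Set.Ioo (-π) π from ⟨by linarith [h.1, pi_pos], h.2⟩)]
    · rw [Set.indicator_of_notMem h]
      by_cases h' : θ ∈ Set.Ioo (-π) π
      · have : θ ≤ 0 := by
          by_contra hc
          exact h ⟨not_le.1 hc, h'.2⟩
        rw [Set.indicator_of_mem h', ENNReal.ofReal_of_nonpos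
          (sin_nonpos_of_nonpos_of_neg_pi_le this h'.1.le), zero_mul]
      · rw [Set.indicator_of_notMem h']
  have h7 : (3 : ℝ≥0∞) * ENNReal.ofReal (1 / 3) = 1 := by
    rw [← ENNReal.ofReal_ofNat, ← ENNReal.ofReal_mul (by norm_num)]
    norm_num
  rw [h4, h6, mul_left_comm, ← mul_assoc 3, h7, one_mul]

/-! ### The two collision integrals -/

lemma subst_le (G : ℝ → ℝ≥0∞) (S : Set ℝ) (hS : MeasurableSet S) (k d : ℝ → ℝ)
    (hk : ∀ x ∈ S, HasDerivAt k (d x) x) (hinj : Set.InjOn k S) (hpos : ∀ x ∈ S, 0 ≤ k x) :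
    ∫⁻ x in S, ENNReal.ofReal |d x| * G (k x) ≤ ∫⁻ ρ in Set.Ioi 0, G ρ := by
  rw [← lintegral_image_eq_lintegral_abs_deriv_mul hS
    (fun x hx => (hk x hx).hasDerivWithinAt) hinj, setLIntegral_congr Ioi_ae_eq_Ici]
  exact lintegral_mono_set (by rintro _ ⟨x, hx, rfl⟩; exact hpos x hx)

/-- Change of variables on `(0, π/2]` and `(π/2, π)` separately, the substitutions `k₁`, `k₂` being
injective on their respective halves only. -/
lemma polar_halves (F G : ℝ → ℝ≥0∞) (c : ℝ≥0∞) (hc : c ≠ ⊤) (k₁ d₁ k₂ d₂ : ℝ → ℝ)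
    (hk₁ : ∀ x ∈ Set.Ioc 0 (π / 2), HasDerivAt k₁ (d₁ x) x)
    (hk₂ : ∀ x ∈ Set.Ioo (π / 2) π, HasDerivAt k₂ (d₂ x) x)
    (hi₁ : Set.InjOn k₁ (Set.Ioc 0 (π / 2))) (hi₂ : Set.InjOn k₂ (Set.Ioo (π / 2) π))
    (hp₁ : ∀ x ∈ Set.Ioc 0 (π / 2), 0 ≤ k₁ x) (hp₂ : ∀ x ∈ Set.Ioo (π / 2) π, 0 ≤ k₂ x)
    (hF₁ : ∀ x ∈ Set.Ioc 0 (π / 2), F x = c * (ENNReal.ofReal |d₁ x| * G (k₁ x)))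
    (hF₂ : ∀ x ∈ Set.Ioo (π / 2) π, F x = c * (ENNReal.ofReal |d₂ x| * G (k₂ x))) :
    ∫⁻ θ in Set.Ioo 0 π, F θ ≤ c * (2 * ∫⁻ ρ in Set.Ioi 0, G ρ) := by
  have hπ := pi_pos
  rw [← Set.Ioc_union_Ioo_eq_Ioo (show (0 : ℝ) ≤ π / 2 by positivity)
    (show π / 2 < π by linarith)]
  refine (lintegral_union_le _ _ _).trans ?_
  rw [setLIntegral_congr_fun measurableSet_Ioc hF₁, setLIntegral_congr_fun measurableSet_Ioo hF₂,
    lintegral_const_mul' _ _ hc, lintegral_const_mul' _ _ hc, ← mul_add, two_mul]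
  exact mul_le_mul_right (add_le_add (subst_le G _ measurableSet_Ioc k₁ d₁ hk₁ hi₁ hp₁)
    (subst_le G _ measurableSet_Ioo k₂ d₂ hk₂ hi₂ hp₂)) _

/-- The normalisation forces integrability, as the Bochner integral would otherwise be `0`. -/
lemma profile_lintegral (φh : ℝ → ℝ)
    (hnorm : 2 * π * ∫ r in Set.Ioi (0 : ℝ), r ^ 3 * (φh r) ^ 2 = 1) :
    ∫⁻ r in Set.Ioi (0 : ℝ), ENNReal.ofReal (r ^ 3 * (φh r) ^ 2) = ENNReal.ofReal (1 / (2 * π)) := by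
  have hint : Integrable (fun r => r ^ 3 * (φh r) ^ 2) (volume.restrict (Set.Ioi (0 : ℝ))) := by
    by_contra h
    rw [integral_undef h] at hnorm
    simp at hnorm
  rw [← ofReal_integral_eq_lintegral_ofReal hint]
  · congr 1
    field_simp
    linarith
  · filter_upwards [ae_restrict_mem measurableSet_Ioi] with r hr
    have : 0 < r := hr
    positivity

lemma two_pi_combine (ε r : ℝ) (hr : 0 < r) (hε : 0 < ε) :
    ENNReal.ofReal (2 * π) * (ENNReal.ofReal (ε ^ 4 / r) * (2 * ENNReal.ofReal (1 / (2 * π)))) =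
      ENNReal.ofReal (2 * ε ^ 4 / r) := by
  have hπ := pi_pos
  rw [← ENNReal.ofReal_ofNat, ← ENNReal.ofReal_mul (by positivity),
    ← ENNReal.ofReal_mul (by positivity), ← ENNReal.ofReal_mul (by positivity)]
  congr 1
  field_simp

/-- The weight attached to `v - v'`, whose length is `|z| |cos θ|`; the substitution is
`ρ = |z| |cos θ| / ε`. -/
lemma sphere_integral_long (φh : ℝ → ℝ) (hmeas : Measurable φh)
    (hnorm : 2 * π * ∫ r in Set.Ioi (0 : ℝ), r ^ 3 * (φh r) ^ 2 = 1)
    (z : E3) (hz : z ≠ 0) (ε : ℝ) (hε : 0 < ε) :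
    ∫⁻ ω : Metric.sphere (0 : E3) 1, ENNReal.ofReal
      ((‖z‖ * |⟪z, ω⟫ / ‖z‖|) ^ 3 * φh (‖z‖ * |⟪z, ω⟫ / ‖z‖| / ε) ^ 2)
      ∂((volume : Measure E3).toSphere) ≤ ENNReal.ofReal (2 * ε ^ 4 / ‖z‖) := by
  have hr : 0 < ‖z‖ := by simpa using hz
  rw [lintegral_sphere_polar (fun t => ENNReal.ofReal
    ((‖z‖ * |t|) ^ 3 * φh (‖z‖ * |t| / ε) ^ 2)) (by fun_prop) z hz,
    ← two_pi_combine ε ‖z‖ hr hε, ← profile_lintegral φh hnorm]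
  set r := ‖z‖
  gcongr
  have hfac : ∀ θ t : ℝ, 0 ≤ sin θ → 0 ≤ t → |cos θ| = t →
      ENNReal.ofReal (sin θ) * ENNReal.ofReal ((r * |cos θ|) ^ 3 * φh (r * |cos θ| / ε) ^ 2) =
      ENNReal.ofReal (ε ^ 4 / r) * (ENNReal.ofReal (r * sin θ / ε) *
        ENNReal.ofReal ((r * t / ε) ^ 3 * φh (r * t / ε) ^ 2)) := by
    intro θ t hs ht h
    rw [h, ← ENNReal.ofReal_mul hs, ← ENNReal.ofReal_mul (by positivity),
      ← ENNReal.ofReal_mul (by positivity)]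
    congr 1
    field_simp
  refine polar_halves _ (fun ρ => ENNReal.ofReal (ρ ^ 3 * φh ρ ^ 2)) _ ENNReal.ofReal_ne_top
    (fun θ => r * cos θ / ε) (fun θ => r * (-sin θ) / ε)
    (fun θ => r * (-cos θ) / ε) (fun θ => r * sin θ / ε) ?_ ?_ ?_ ?_ ?_ ?_ ?_ ?_
  · intro θ _
    exact ((hasDerivAt_cos θ).const_mul r).div_const ε
  · intro θ _
    simpa using ((hasDerivAt_cos θ).neg.const_mul r).div_const ε
  · intro x hx y hy hxy
    refine injOn_cos ⟨hx.1.le, by linarith [hx.2, pi_pos]⟩ ⟨hy.1.le, by linarith [hy.2, pi_pos]⟩ ?_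
    simp only at hxy
    field_simp at hxy
    exact hxy
  · intro x hx y hy hxy
    refine injOn_cos ⟨by linarith [hx.1, pi_pos], hx.2.le⟩ ⟨by linarith [hy.1, pi_pos], hy.2.le⟩ ?_
    simp only at hxy
    field_simp at hxy
    linarith
  · intro θ hθ
    have := cos_nonneg_of_mem_Icc (x := θ) ⟨by linarith [hθ.1, pi_pos], hθ.2⟩
    positivity
  · intro θ hθ
    have : cos θ ≤ 0 := cos_nonpos_of_pi_div_two_le_of_le hθ.1.le (by linarith [hθ.2, pi_pos])
    have : 0 ≤ -cos θ := by linarith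
    positivity
  · intro θ hθ
    have hc := cos_nonneg_of_mem_Icc (x := θ) ⟨by linarith [hθ.1, pi_pos], hθ.2⟩
    have hs : 0 ≤ sin θ := sin_nonneg_of_nonneg_of_le_pi hθ.1.le (by linarith [hθ.2, pi_pos])
    rw [hfac θ (cos θ) hs hc (abs_of_nonneg hc)]
    rw [show r * -sin θ / ε = -(r * sin θ / ε) by ring, abs_neg,
      abs_of_nonneg (show 0 ≤ r * sin θ / ε by positivity)]
  · intro θ hθ
    have hc : cos θ ≤ 0 := cos_nonpos_of_pi_div_two_le_of_le hθ.1.le (by linarith [hθ.2, pi_pos])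
    have hs : 0 ≤ sin θ := sin_nonneg_of_nonneg_of_le_pi (by linarith [hθ.1, pi_pos]) hθ.2.le
    rw [hfac θ (-cos θ) hs (by linarith) (abs_of_nonpos hc),
      abs_of_nonneg (show 0 ≤ r * sin θ / ε by positivity)]

/-- The weight attached to `v - v'_*`, whose length is `|z| sin θ`; the substitution is
`ρ = |z| sin θ / ε`, and the factor `|z| |cos θ|` of the kernel supplies its Jacobian. -/
lemma sphere_integral_perp (φh : ℝ → ℝ) (hmeas : Measurable φh)
    (hnorm : 2 * π * ∫ r in Set.Ioi (0 : ℝ), r ^ 3 * (φh r) ^ 2 = 1)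
    (z : E3) (hz : z ≠ 0) (ε : ℝ) (hε : 0 < ε) :
    ∫⁻ ω : Metric.sphere (0 : E3) 1, ENNReal.ofReal
      (‖z‖ * |⟪z, ω⟫ / ‖z‖| * (‖z‖ * √(1 - (⟪z, ω⟫ / ‖z‖) ^ 2)) ^ 2 *
        φh (‖z‖ * √(1 - (⟪z, ω⟫ / ‖z‖) ^ 2) / ε) ^ 2)
      ∂((volume : Measure E3).toSphere) ≤ ENNReal.ofReal (2 * ε ^ 4 / ‖z‖) := by
  have hr : 0 < ‖z‖ := by simpa using hz
  rw [lintegral_sphere_polar (fun t => ENNReal.ofReal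
    (‖z‖ * |t| * (‖z‖ * √(1 - t ^ 2)) ^ 2 * φh (‖z‖ * √(1 - t ^ 2) / ε) ^ 2)) (by fun_prop) z hz,
    ← two_pi_combine ε ‖z‖ hr hε, ← profile_lintegral φh hnorm]
  set r := ‖z‖
  gcongr
  have hfac : ∀ θ : ℝ, 0 ≤ sin θ →
      ENNReal.ofReal (sin θ) * ENNReal.ofReal (r * |cos θ| * (r * √(1 - cos θ ^ 2)) ^ 2 *
        φh (r * √(1 - cos θ ^ 2) / ε) ^ 2) =
      ENNReal.ofReal (ε ^ 4 / r) * (ENNReal.ofReal |r * cos θ / ε| *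
        ENNReal.ofReal ((r * sin θ / ε) ^ 3 * φh (r * sin θ / ε) ^ 2)) := by
    intro θ hs
    rw [← abs_sin_eq_sqrt_one_sub_cos_sq, abs_of_nonneg hs, abs_div, abs_mul, abs_of_pos hr,
      abs_of_pos hε, ← ENNReal.ofReal_mul hs, ← ENNReal.ofReal_mul (by positivity),
      ← ENNReal.ofReal_mul (by positivity)]
    congr 1
    field_simp
  have hs : ∀ θ ∈ Set.Icc 0 π, 0 ≤ sin θ := fun θ hθ => sin_nonneg_of_mem_Icc hθ
  refine polar_halves _ (fun ρ => ENNReal.ofReal (ρ ^ 3 * φh ρ ^ 2)) _ ENNReal.ofReal_ne_top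
    (fun θ => r * sin θ / ε) (fun θ => r * cos θ / ε)
    (fun θ => r * sin θ / ε) (fun θ => r * cos θ / ε) ?_ ?_ ?_ ?_ ?_ ?_ ?_ ?_
  · intro θ _
    exact ((hasDerivAt_sin θ).const_mul r).div_const ε
  · intro θ _
    exact ((hasDerivAt_sin θ).const_mul r).div_const ε
  · intro x hx y hy hxy
    refine injOn_sin ⟨by linarith [hx.1, pi_pos], hx.2⟩ ⟨by linarith [hy.1, pi_pos], hy.2⟩ ?_
    simp only at hxy
    field_simp at hxy
    exact hxy
  · intro x hx y hy hxy
    have : π - x = π - y := by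
      refine injOn_sin ⟨by linarith [hx.2, pi_pos], by linarith [hx.1]⟩
        ⟨by linarith [hy.2, pi_pos], by linarith [hy.1]⟩ ?_
      simp only at hxy
      field_simp at hxy
      rw [sin_pi_sub, sin_pi_sub, hxy]
    linarith
  · intro θ hθ
    have := hs θ ⟨hθ.1.le, by linarith [hθ.2, pi_pos]⟩
    positivity
  · intro θ hθ
    have := hs θ ⟨by linarith [hθ.1, pi_pos], hθ.2.le⟩
    positivity
  · intro θ hθ
    exact hfac θ (hs θ ⟨hθ.1.le, by linarith [hθ.2, pi_pos]⟩)
  · intro θ hθ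
    exact hfac θ (hs θ ⟨by linarith [hθ.1, pi_pos], hθ.2.le⟩)

/-! ### The quantum collision kernel -/

lemma Bker_abs_le (φh : ℝ → ℝ) (lam ε : ℝ) (hε : 0 < ε) (hlam : lam = 0 ∨ lam = -1 ∨ lam = 1)
    (v w ω : E3) : |Bker φh lam ε v w ω| ≤ 2 * |⟪v - w, ω⟫| / ε ^ 4 *
      (φh (‖v - vPost v w ω‖ / ε) ^ 2 + φh (‖v - vPostStar v w ω‖ / ε) ^ 2) := by
  unfold Bker
  generalize φh (‖v - vPost v w ω‖ / ε) = a
  generalize φh (‖v - vPostStar v w ω‖ / ε) = b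
  have hk : 0 ≤ |⟪v - w, ω⟫| / ε ^ 4 := by positivity
  rw [mul_div_assoc, mul_comm 2, mul_assoc]
  rcases hlam with rfl | rfl | rfl
  · rw [if_pos rfl, abs_of_nonneg (by positivity)]
    gcongr
    nlinarith [sq_nonneg a, sq_nonneg b]
  · rw [if_neg (by norm_num), abs_of_nonneg (by positivity)]
    gcongr
    nlinarith [sq_nonneg (a + b)]
  · rw [if_neg (by norm_num), abs_of_nonneg (by positivity)]
    gcongr
    nlinarith [sq_nonneg (a - b)]

lemma norm_transfer (v w ω : E3) (hω : ‖ω‖ = 1) :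
    ‖v - vPost v w ω‖ = |⟪v - w, ω⟫| ∧
    ‖v - vPostStar v w ω‖ ^ 2 = ‖v - w‖ ^ 2 - ⟪v - w, ω⟫ ^ 2 := by
  constructor
  · simp [vPost, norm_smul, hω]
  · rw [vPostStar, ← sub_sub, norm_sub_sq_real, inner_smul_right, norm_smul, hω, mul_one,
      Real.norm_eq_abs, sq_abs]
    ring

/-- The bound for `L^ε_λ`; the argument gives the constant `12` in place of `16`. -/
lemma eps_bound (φh : ℝ → ℝ) (hmeas : Measurable φh)
    (hnorm : 2 * π * ∫ r in Set.Ioi (0 : ℝ), r ^ 3 * (φh r) ^ 2 = 1)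
    (lam : ℝ) (hlam : lam = 0 ∨ lam = -1 ∨ lam = 1)
    (ψ : E3 → ℝ) (hψ : ContDiff ℝ 2 ψ) (hsupp : HasCompactSupport ψ)
    (v w : E3) (hvw : v ≠ w) (ε : ℝ) (hε : 0 < ε) :
    |Leps φh lam ε ψ v w| ≤ 16 * hessSupNorm ψ / ‖v - w‖ := by
  have hz : v - w ≠ 0 := sub_ne_zero.2 hvw
  have hr : 0 < ‖v - w‖ := by simpa using hz
  have hH0 := hessSupNorm_nonneg ψ
  have hRHS : 0 ≤ 16 * hessSupNorm ψ / ‖v - w‖ := by positivity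
  set F : E3 → ℝ := fun ω => Bker φh lam ε v w ω *
    (ψ (vPost v w ω) + ψ (vPostStar v w ω) - ψ v - ψ w) with hFdef
  have hL : Leps φh lam ε ψ v w = (1 / 2) * ∫ ω : Metric.sphere (0 : E3) 1, F ω
    ∂((volume : Measure E3).toSphere) := rfl
  rw [hL]
  by_cases hint : Integrable (fun ω : Metric.sphere (0 : E3) 1 => F ω)
      ((volume : Measure E3).toSphere)
  swap
  -- A non-integrable integrand has Bochner integral `0`, so nothing is to be shown.
  · rw [integral_undef hint]; simpa using hRHS
  -- `R` is the rotation by `π` about the axis `v - w`; it leaves `(v - w)·ω` unchanged.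
  let R : E3 ≃ₗᵢ[ℝ] E3 := (Submodule.span ℝ {v - w}).reflection
  have hR : ∀ x : E3, R x = (2 * (⟪v - w, x⟫ / ‖v - w‖ ^ 2)) • (v - w) - x := by
    intro x
    simp only [R]
    rw [Submodule.reflection_singleton_apply]
    simp only [RCLike.ofReal_real_eq_id, id]
    module
  have hRin : ∀ x : E3, ⟪v - w, R x⟫ = ⟪v - w, x⟫ := by
    intro x
    rw [hR, inner_sub_right, inner_smul_right, real_inner_self_eq_norm_sq]
    field_simp
    ring
  have hmp := measurePreserving_sphere R
  have hintR : Integrable (fun ω : Metric.sphere (0 : E3) 1 => F (R ω))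
      ((volume : Measure E3).toSphere) := hmp.integrable_comp_of_integrable hint
  have hRint : ∫ ω : Metric.sphere (0 : E3) 1, F (R ω) ∂((volume : Measure E3).toSphere) =
      ∫ ω : Metric.sphere (0 : E3) 1, F ω ∂((volume : Measure E3).toSphere) := by
    have := integral_map (f := fun ω : Metric.sphere (0 : E3) 1 => F ω)
      hmp.measurable.aemeasurable (by rw [hmp.map_eq]; exact hint.aestronglyMeasurable)
    rw [hmp.map_eq] at this
    exact this.symm
  have hsum : 2 * ∫ ω : Metric.sphere (0 : E3) 1, F ω ∂((volume : Measure E3).toSphere) =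
      ∫ ω : Metric.sphere (0 : E3) 1, (F ω + F (R ω)) ∂((volume : Measure E3).toSphere) := by
    rw [integral_add hint hintR, hRint, two_mul]
  -- Each `φ̂²` is paired with the square of its own transfer, so that both terms become the weights
  -- of the two collision integrals.
  have hpt : ∀ ω : E3, ‖ω‖ = 1 → |F ω + F (R ω)| ≤ 12 * hessSupNorm ψ / ε ^ 4 *
      (((‖v - w‖ * |⟪v - w, ω⟫ / ‖v - w‖|) ^ 3 * φh (‖v - w‖ * |⟪v - w, ω⟫ / ‖v - w‖| / ε) ^ 2) +
      (‖v - w‖ * |⟪v - w, ω⟫ / ‖v - w‖| * (‖v - w‖ * √(1 - (⟪v - w, ω⟫ / ‖v - w‖) ^ 2)) ^ 2 *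
        φh (‖v - w‖ * √(1 - (⟪v - w, ω⟫ / ‖v - w‖) ^ 2) / ε) ^ 2)) := by
    intro ω hω
    have hω' : ‖R ω‖ = 1 := by simpa using hω
    obtain ⟨ha, hb⟩ := norm_transfer v w ω hω
    obtain ⟨ha', hb'⟩ := norm_transfer v w (R ω) hω'
    rw [hRin] at ha' hb'
    have hbb : ‖v - vPostStar v w (R ω)‖ = ‖v - vPostStar v w ω‖ := by
      rw [← sq_eq_sq₀ (norm_nonneg _) (norm_nonneg _), hb, hb']
    have hB : Bker φh lam ε v w (R ω) = Bker φh lam ε v w ω := by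
      unfold Bker
      rw [hRin, ha, ha', hbb]
    have e1 : ‖v - w‖ * |⟪v - w, ω⟫ / ‖v - w‖| = ‖v - vPost v w ω‖ := by
      rw [ha, abs_div, abs_of_pos hr]; field_simp
    have e2 : ‖v - w‖ * √(1 - (⟪v - w, ω⟫ / ‖v - w‖) ^ 2) = ‖v - vPostStar v w ω‖ := by
      rw [← Real.sqrt_sq (norm_nonneg (v - vPostStar v w ω)), hb]
      nth_rewrite 1 [← Real.sqrt_sq hr.le]
      rw [← Real.sqrt_mul (sq_nonneg _)]
      congr 1
      field_simp
    rw [e1, e2]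
    have hBle := Bker_abs_le φh lam ε hε hlam v w ω
    rw [← ha] at hBle
    have hD1 : |(ψ (vPost v w ω) + ψ (vPostStar v w ω) - ψ v - ψ w) +
        (ψ (vPost v w (R ω)) + ψ (vPostStar v w (R ω)) - ψ v - ψ w)| ≤
        6 * hessSupNorm ψ * ‖v - vPost v w ω‖ ^ 2 := by
      have := symm_diff_bound hψ hsupp v w (v - vPost v w ω) (v - vPost v w (R ω))
        (⟪v - w, ω⟫ ^ 2 / ‖v - w‖ ^ 2) (by
          simp only [vPost, hRin]; rw [hR ω]; module) (by rw [ha, ha']) (by positivity)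
        (by rw [ha, sq_abs]; field_simp)
      convert this using 6 <;> simp only [vPost, vPostStar] <;> congr 1 <;> module
    -- Exchanging `v'` and `v'_*` does not change the collision difference, so `v - v'_*` may serve
    -- as the transfer as well.
    have hD2 : |(ψ (vPost v w ω) + ψ (vPostStar v w ω) - ψ v - ψ w) +
        (ψ (vPost v w (R ω)) + ψ (vPostStar v w (R ω)) - ψ v - ψ w)| ≤
        6 * hessSupNorm ψ * ‖v - vPostStar v w ω‖ ^ 2 := by
      have hc : (1 - ⟪v - w, ω⟫ ^ 2 / ‖v - w‖ ^ 2) * ‖v - w‖ ^ 2 =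
          ‖v - vPostStar v w ω‖ ^ 2 := by rw [hb]; field_simp
      have := symm_diff_bound hψ hsupp v w (v - vPostStar v w ω) (v - vPostStar v w (R ω))
        (1 - ⟪v - w, ω⟫ ^ 2 / ‖v - w‖ ^ 2) (by
          simp only [vPostStar, hRin]; rw [hR ω]; module) hbb
        (nonneg_of_mul_nonneg_left (hc ▸ sq_nonneg _) (by positivity)) hc
      rw [add_comm (ψ (vPost v w ω)), add_comm (ψ (vPost v w (R ω)))]
      convert this using 6 <;> simp only [vPost, vPostStar] <;> congr 1 <;> module
    set D := (ψ (vPost v w ω) + ψ (vPostStar v w ω) - ψ v - ψ w) +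
        (ψ (vPost v w (R ω)) + ψ (vPostStar v w (R ω)) - ψ v - ψ w) with hDdef
    have hFF : F ω + F (R ω) = Bker φh lam ε v w ω * D := by
      simp only [hFdef, hDdef, hB]; ring
    rw [hFF, abs_mul]
    set A := ‖v - vPost v w ω‖
    set C := ‖v - vPostStar v w ω‖
    have hA : 0 ≤ A := norm_nonneg _
    calc _ ≤ (2 * A / ε ^ 4 * (φh (A / ε) ^ 2 + φh (C / ε) ^ 2)) * |D| := by gcongr
      _ = 2 * A / ε ^ 4 * (φh (A / ε) ^ 2 * |D| + φh (C / ε) ^ 2 * |D|) := by ring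
      _ ≤ 2 * A / ε ^ 4 * (φh (A / ε) ^ 2 * (6 * hessSupNorm ψ * A ^ 2) +
          φh (C / ε) ^ 2 * (6 * hessSupNorm ψ * C ^ 2)) := by gcongr
      _ = _ := by ring
  have hJ1 := sphere_integral_long φh hmeas hnorm (v - w) hz ε hε
  have hJ2 := sphere_integral_perp φh hmeas hnorm (v - w) hz ε hε
  have hbig : ‖∫ ω : Metric.sphere (0 : E3) 1, (F ω + F (R ω))
      ∂((volume : Measure E3).toSphere)‖ₑ ≤ ENNReal.ofReal (48 * hessSupNorm ψ / ‖v - w‖) := by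
    refine (enorm_integral_le_lintegral_enorm _).trans ?_
    have hfin : ENNReal.ofReal (48 * hessSupNorm ψ / ‖v - w‖) =
        ENNReal.ofReal (12 * hessSupNorm ψ / ε ^ 4) *
        (ENNReal.ofReal (2 * ε ^ 4 / ‖v - w‖) + ENNReal.ofReal (2 * ε ^ 4 / ‖v - w‖)) := by
      rw [← ENNReal.ofReal_add (by positivity) (by positivity),
        ← ENNReal.ofReal_mul (by positivity)]
      congr 1
      field_simp
      ring
    rw [hfin]
    refine le_trans ?_ (mul_le_mul_right (add_le_add hJ1 hJ2) _)
    rw [← lintegral_add_left (by fun_prop), ← lintegral_const_mul' _ _ ENNReal.ofReal_ne_top]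
    refine lintegral_mono fun ω => ?_
    rw [Real.enorm_eq_ofReal_abs, ← ENNReal.ofReal_add (by positivity) (by positivity),
      ← ENNReal.ofReal_mul (by positivity)]
    exact ENNReal.ofReal_le_ofReal (hpt ω (by simp))
  rw [Real.enorm_eq_ofReal_abs, ENNReal.ofReal_le_ofReal_iff (by positivity), ← hsum, abs_mul,
    abs_of_pos (by norm_num : (0 : ℝ) < 2)] at hbig
  rw [abs_mul, abs_of_pos (by norm_num : (0 : ℝ) < 1 / 2)]
  have : 48 * hessSupNorm ψ / ‖v - w‖ = 3 * (16 * hessSupNorm ψ / ‖v - w‖) := by ring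
  linarith

end Helpers

/-- Under the normalization `2π ∫₀^∞ r³ φ̂(r)² dr = 1`, for `λ ∈ {0,−1,+1}`
and `ψ ∈ C²_c(ℝ³)`, for all `v ≠ v_*` and all `ε > 0`,
`|L^ε_λ[ψ](v,v_*)| ≤ 16‖D²ψ‖_∞/|v−v_*|` and `|L[ψ](v,v_*)| ≤ 16‖D²ψ‖_∞/|v−v_*|`. -/
theorem stmt5 (φh : ℝ → ℝ) (hmeas : Measurable φh)
    (hnorm : 2 * π * ∫ r in Set.Ioi (0 : ℝ), r ^ 3 * (φh r) ^ 2 = 1)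
    (lam : ℝ) (hlam : lam = 0 ∨ lam = -1 ∨ lam = 1)
    (ψ : E3 → ℝ) (hψ : ContDiff ℝ 2 ψ) (hsupp : HasCompactSupport ψ)
    (v w : E3) (hvw : v ≠ w) :
    (∀ ε : ℝ, 0 < ε → |Leps φh lam ε ψ v w| ≤ 16 * hessSupNorm ψ / ‖v - w‖) ∧
    |Llandau ψ v w| ≤ 16 * hessSupNorm ψ / ‖v - w‖ := by
  exact ⟨fun ε hε => eps_bound φh hmeas hnorm lam hlam ψ hψ hsupp v w hvw ε hε,
    landau_bound hψ hsupp v w hvw⟩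

end
end

section
/- Let N ∈ ℕ and Y ⊂ ℝ^N be a Borel set. Suppose F : Y × ℝ³ → (0,∞) and D : Y × ℝ³ → ℝ³ are measurable with F ∈ L¹_loc(Y × ℝ³), D ∈ L¹_loc(Y × ℝ³, ℝ³), D(y,z)·z = 0 for a.e. (y,z), and ∫_{Y×ℝ³} Ψ(y,z)·D(y,z) dz dy = − ∫_{Y×ℝ³} F(y,z) · ∇_z·(Π(z)Ψ(y,z)) dz dy for every Ψ ∈ T_c(Y×ℝ³, ℝ³) (i.e., D is the weak projection gradient of F in z ≠ 0). Assume furthermore that inf { F(y,z) : y ∈ Y, |y| ≤ R₁, |z| ≤ R₂ } > 0 for all 0 < R₁, R₂ < ∞, and that (y,z) ↦ F(y,z)/|z| belongs to L¹_loc(Y×ℝ³). Then √F has the weak projection gradient D/(2√F) in z ≠ 0; that is, ∫_{Y×ℝ³} Ψ(y,z) · ( D(y,z) / (2√(F(y,z))) ) dz dy = − ∫_{Y×ℝ³} √(F(y,z)) · ∇_z·(Π(z)Ψ(y,z)) dz dy for every Ψ ∈ T_c(Y×ℝ³, ℝ³). -/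
/-!
Let `J_k` be the skew-symmetric generators of the rotations in the three coordinate planes. By
Lagrange's identity, `Π(z)Ψ = ∑ k, φ_k J_k z` with `φ_k = (Ψ · J_k z) / |z|²`, and since each field
`J_k z` is divergence-free and tangential, `∇·(Π Ψ) = ∑ k, ∂_{J_k z} φ_k`. As `D` is tangential,
`Ψ · D = ∑ k, φ_k (D · J_k z)`. The claim thus reduces to the chain rule for `√F` along each of the
three flows `T_θ (y, z) = (y, exp(θ J_k) z)`, which preserve Lebesgue measure on the part of
`Y × ℝ³` inside any centred ball.

Testing the hypothesis with `Ψ = φ J z`, for `φ` smooth, says that `g = D · J z` is the weak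
derivative of `F` along the flow; transporting `φ` by the flow and integrating in time upgrades this
to `F ∘ T_h - F = ∫₀ʰ g ∘ T_s ds` almost everywhere (`hasFlowDeriv_rot`).

The chain rule `MPFlow.sqrt_chain` holds for any measure-preserving flow. With
`√a - √b = (a - b) / (√a + √b)`, Fubini and invariance of the measure, the tested difference quotient
of `√F` becomes an average of integrals `∫ (φ / (√F + √F)) g` in which `g` stays fixed while `φ` and
the two occurrences of `F` are evaluated at points shifted by `O(h)`. Since
`‖F ∘ T_h - F‖_{L¹} ≤ |h| ‖g‖_{L¹}`, the shifted values converge almost everywhere along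
subsequences, and the lower bound on `F` makes dominated convergence applicable.

Because `Ψ(y, 0) = 0` and `∂_z Ψ` is bounded, the coefficients `φ_k` are bounded and Lipschitz along
the rotations, although discontinuous at `z = 0`; they are admissible in `sqrt_chain` without a cutoff
near `z = 0`.
-/

open MeasureTheory
open scoped RealInnerProductSpace

noncomputable section

/-- The test class `T_c(Y × ℝ³, ℝ³)`: continuous compactly supported `Ψ` with `Ψ(y,0) = 0`,
`z ↦ Ψ(y,z)` of class `C¹` for each `y`, and uniformly bounded `z`-derivative. -/
def TestC (N : ℕ) (Ψ : EuclideanSpace ℝ (Fin N) × E3 → E3) : Prop :=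
  Continuous Ψ ∧ HasCompactSupport Ψ ∧ (∀ y, Ψ (y, 0) = 0) ∧
    (∀ y, ContDiff ℝ 1 fun z => Ψ (y, z)) ∧
    ∃ C : ℝ, ∀ y z, ‖fderiv ℝ (fun w => Ψ (y, w)) z‖ ≤ C

/-- The divergence `∇_z · (Π(z)Ψ(y,z)) = ∇_z·Ψ − nᵀ(∂_zΨ)n − 2(Ψ·n)/|z|` with `n = z/|z|`. -/
noncomputable def divPi (N : ℕ) (Ψ : EuclideanSpace ℝ (Fin N) × E3 → E3)
    (y : EuclideanSpace ℝ (Fin N)) (z : E3) : ℝ :=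
  (∑ i : Fin 3, fderiv ℝ (fun w => Ψ (y, w)) z (EuclideanSpace.single i 1) i) -
    ⟪‖z‖⁻¹ • z, fderiv ℝ (fun w => Ψ (y, w)) z (‖z‖⁻¹ • z)⟫ -
    2 * ⟪Ψ (y, z), ‖z‖⁻¹ • z⟫ / ‖z‖

open Filter Topology

/-! ### The chain rule for the square root along a measure-preserving flow -/

/-- A one-parameter group `T` of transformations preserving the measure `ν`, jointly measurable
in time and space. -/
structure MPFlow {X : Type*} [MeasurableSpace X] (ν : Measure X) (T : ℝ → X → X) : Prop where
  zero : ∀ p, T 0 p = p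
  add : ∀ a b p, T (a + b) p = T a (T b p)
  meas : Measurable fun q : ℝ × X => T q.1 q.2
  mp : ∀ θ, MeasurePreserving (T θ) ν ν

namespace MPFlow

variable {X : Type*} [MeasurableSpace X] {ν : Measure X} {T : ℝ → X → X}

lemma meas_comp (hT : MPFlow ν T) {Z : Type*} [MeasurableSpace Z] {a : Z → ℝ} {b : Z → X}
    (ha : Measurable a) (hb : Measurable b) : Measurable fun q => T (a q) (b q) :=
  hT.meas.comp (ha.prodMk hb)

lemma neg_self (hT : MPFlow ν T) (θ : ℝ) (p : X) : T θ (T (-θ) p) = p := by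
  rw [← hT.add, add_neg_cancel, hT.zero]

lemma self_neg (hT : MPFlow ν T) (θ : ℝ) (p : X) : T (-θ) (T θ p) = p := by
  rw [← hT.add, neg_add_cancel, hT.zero]

lemma integral_comp (hT : MPFlow ν T) (θ : ℝ) {f : X → ℝ} (hf : Measurable f) :
    ∫ p, f (T θ p) ∂ν = ∫ p, f p ∂ν := by
  rw [← integral_map (hT.mp θ).measurable.aemeasurable, (hT.mp θ).map_eq]
  rw [(hT.mp θ).map_eq]
  exact hf.aestronglyMeasurable

lemma integrable_comp (hT : MPFlow ν T) (θ : ℝ) {f : X → ℝ} (hf : Integrable f ν) :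
    Integrable (fun p => f (T θ p)) ν :=
  (hT.mp θ).integrable_comp_of_integrable hf

/-- This holds since the shear `(u, p) ↦ (u, T (h u) p)` preserves the product measure. -/
lemma integrable_shear [IsFiniteMeasure ν] (hT : MPFlow ν T) (h : ℝ) {g : X → ℝ}
    (hg : Integrable g ν) :
    Integrable (fun q : ℝ × X => g (T (h * q.1) q.2)) ((volume.restrict (Set.Ioc 0 1)).prod ν) := by
  have hm : MeasurePreserving (fun q : ℝ × X => (id q.1, T (h * q.1) q.2))
      ((volume.restrict (Set.Ioc (0 : ℝ) 1)).prod ν)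
      ((volume.restrict (Set.Ioc (0 : ℝ) 1)).prod ν) := by
    refine (MeasurePreserving.id _).skew_product (g := fun u p => T (h * u) p) ?_ ?_
    · exact hT.meas_comp (measurable_const.mul measurable_fst) measurable_snd
    · exact Eventually.of_forall fun u => (hT.mp _).map_eq
  exact hm.integrable_comp_of_integrable (hg.comp_snd (volume.restrict (Set.Ioc (0 : ℝ) 1)))

/-- `g` is the derivative of `F` along the flow `T`, in the integrated form
`F ∘ T_h - F = ∫₀ʰ g ∘ T_s ds` almost everywhere for each `h`. The substitution `s = h u` covers both
signs of `h` at once. -/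
def HasFlowDeriv (ν : Measure X) (T : ℝ → X → X) (F g : X → ℝ) : Prop :=
  ∀ h : ℝ, ∀ᵐ p ∂ν, F (T h p) - F p = h * ∫ u in Set.Ioc (0 : ℝ) 1, g (T (h * u) p)

/-- `‖F ∘ T_h - F‖_{L¹} ≤ |h| ‖g‖_{L¹}`: a flow derivative in `L¹` makes `F` continuous along the
flow in `L¹`. -/
lemma eLpNorm_sub_le [SFinite ν] (hT : MPFlow ν T) {F g : X → ℝ} (hg : Measurable g)
    (hFg : HasFlowDeriv ν T F g) (h : ℝ) :
    eLpNorm ((fun p => F (T h p)) - F) 1 ν ≤ ‖h‖ₑ * eLpNorm g 1 ν := by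
  simp only [eLpNorm_one_eq_lintegral_enorm]
  have hm : Measurable fun q : ℝ × X => ‖g (T (h * q.1) q.2)‖ₑ :=
    (hg.comp (hT.meas_comp (measurable_const.mul measurable_fst) measurable_snd)).enorm
  calc ∫⁻ p, ‖((fun p => F (T h p)) - F) p‖ₑ ∂ν
      ≤ ∫⁻ p, ‖h‖ₑ * (∫⁻ u in Set.Ioc (0 : ℝ) 1, ‖g (T (h * u) p)‖ₑ) ∂ν := by
        refine lintegral_mono_ae ?_
        filter_upwards [hFg h] with p hp
        rw [Pi.sub_apply, hp, enorm_mul]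
        gcongr
        exact enorm_integral_le_lintegral_enorm _
    _ = ‖h‖ₑ * ∫⁻ p, (∫⁻ u in Set.Ioc (0 : ℝ) 1, ‖g (T (h * u) p)‖ₑ) ∂ν := by
        rw [lintegral_const_mul']
        exact enorm_ne_top
    _ = ‖h‖ₑ * ∫⁻ u in Set.Ioc (0 : ℝ) 1, ∫⁻ p, ‖g (T (h * u) p)‖ₑ ∂ν := by
        rw [lintegral_lintegral_swap]
        exact (hm.comp measurable_swap).aemeasurable
    _ = ‖h‖ₑ * ∫⁻ p, ‖g p‖ₑ ∂ν := by
        congr 1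
        have : ∀ u : ℝ, ∫⁻ p, ‖g (T (h * u) p)‖ₑ ∂ν = ∫⁻ p, ‖g p‖ₑ ∂ν := fun u =>
          (hT.mp (h * u)).lintegral_comp hg.enorm
        simp [this]

lemma exists_subseq_ae [SFinite ν] (hT : MPFlow ν T) {F g : X → ℝ} (hF : Measurable F)
    (hg : Measurable g) (hgi : Integrable g ν)
    (hFg : HasFlowDeriv ν T F g) {a : ℕ → ℝ} (ha : Tendsto a atTop (𝓝 0)) :
    ∃ ns : ℕ → ℕ, StrictMono ns ∧
      ∀ᵐ p ∂ν, Tendsto (fun i => F (T (a (ns i)) p)) atTop (𝓝 (F p)) := by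
  have h1 : TendstoInMeasure ν (fun n p => F (T (a n) p)) atTop F := by
    refine tendstoInMeasure_of_tendsto_eLpNorm one_ne_zero
      (fun n => (hF.comp (hT.mp _).measurable).aestronglyMeasurable)
      hF.aestronglyMeasurable ?_
    refine tendsto_of_tendsto_of_tendsto_of_le_of_le tendsto_const_nhds ?_
      (fun _ => bot_le) (fun n => eLpNorm_sub_le hT hg hFg (a n))
    have h2 : Tendsto (fun n => ‖a n‖ₑ) atTop (𝓝 0) := by
      simpa [Function.comp_def] using (continuous_enorm.tendsto (0 : ℝ)).comp ha
    have h3 : eLpNorm g 1 ν ≠ ⊤ := (memLp_one_iff_integrable.2 hgi).eLpNorm_ne_top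
    simpa using ENNReal.Tendsto.mul_const h2 (Or.inr h3)
  exact h1.exists_seq_tendsto_ae

/-- Pointwise-in-`u` limit in the chain rule. Only the positions of `F` and of the test function
move, so that dominated convergence applies with a multiple of `|g|` as majorant. -/
lemma tendsto_inner [SFinite ν] (hT : MPFlow ν T) {F g φ : X → ℝ}
    (hF : Measurable F) (hg : Measurable g) (hgi : Integrable g ν)
    (hFg : HasFlowDeriv ν T F g) {c M C : ℝ} (hc : 0 < c) (hFc : ∀ᵐ p ∂ν, c ≤ F p)
    (hφ : Measurable φ) (hφM : ∀ p, |φ p| ≤ M)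
    (hφL : ∀ h p, |φ (T h p) - φ p| ≤ C * |h|)
    {a b : ℕ → ℝ} (ha : Tendsto a atTop (𝓝 0)) (hb : Tendsto b atTop (𝓝 0)) :
    Tendsto (fun n => ∫ p, φ (T (b n) p) * (√(F (T (a n) p)) + √(F (T (b n) p)))⁻¹ * g p ∂ν)
      atTop (𝓝 (∫ p, φ p * (2 * √(F p))⁻¹ * g p ∂ν)) := by
  refine tendsto_of_subseq_tendsto fun ns hns => ?_
  obtain ⟨m₁, hm₁, h₁⟩ := exists_subseq_ae hT hF hg hgi hFg (ha.comp hns)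
  obtain ⟨m₂, hm₂, h₂⟩ := exists_subseq_ae hT hF hg hgi hFg
    (hb.comp (hns.comp hm₁.tendsto_atTop))
  refine ⟨m₁ ∘ m₂, ?_⟩
  have hcT : ∀ θ, ∀ᵐ p ∂ν, c ≤ F (T θ p) := fun θ =>
    (hT.mp θ).quasiMeasurePreserving.ae hFc
  have hM : 0 ≤ M ∨ IsEmpty X := by
    by_cases h : IsEmpty X
    · exact Or.inr h
    · rw [not_isEmpty_iff] at h
      exact Or.inl ((abs_nonneg _).trans (hφM h.some))
  rcases hM with hM | hM
  swap
  · simp [Measure.eq_zero_of_isEmpty ν]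
  have hsc : 0 < √c := Real.sqrt_pos.2 hc
  refine tendsto_integral_of_dominated_convergence (fun p => M * (√c)⁻¹ * |g p|) ?_ ?_ ?_ ?_
  · intro n
    refine Measurable.aestronglyMeasurable ?_
    have h1 := (hT.mp (a (ns ((m₁ ∘ m₂) n)))).measurable
    have h2 := (hT.mp (b (ns ((m₁ ∘ m₂) n)))).measurable
    fun_prop
  · exact hgi.abs.const_mul _
  · intro n
    filter_upwards [hcT (a (ns ((m₁ ∘ m₂) n))), hcT (b (ns ((m₁ ∘ m₂) n)))] with p h1 h2
    rw [norm_mul, norm_mul, Real.norm_eq_abs, Real.norm_eq_abs, Real.norm_eq_abs]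
    have h3 : √c ≤ √(F (T (a (ns ((m₁ ∘ m₂) n))) p)) + √(F (T (b (ns ((m₁ ∘ m₂) n))) p)) :=
      (Real.sqrt_le_sqrt h1).trans (le_add_of_nonneg_right (Real.sqrt_nonneg _))
    rw [abs_of_nonneg (a := (_ + _ : ℝ)⁻¹) (by positivity)]
    gcongr
    exact hφM _
  · filter_upwards [h₁, h₂, hFc] with p h1 h2 h3
    have h4 : Tendsto (fun n => φ (T (b (ns ((m₁ ∘ m₂) n))) p)) atTop (𝓝 (φ p)) := by
      have hb' := hb.comp (hns.comp (hm₁.tendsto_atTop.comp hm₂.tendsto_atTop))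
      rw [tendsto_iff_norm_sub_tendsto_zero]
      refine squeeze_zero (fun _ => norm_nonneg _) (fun n => hφL _ _) ?_
      simpa using (hb'.abs.const_mul C)
    have h5 := (h1.comp hm₂.tendsto_atTop).sqrt
    have h6 : Tendsto (fun n => √(F (T (b (ns ((m₁ ∘ m₂) n))) p))) atTop (𝓝 (√(F p))) := h2.sqrt
    have hpos : 0 < √(F p) := Real.sqrt_pos.2 (hc.trans_le h3)
    have h7 := (h5.add h6).inv₀ (by positivity)
    rw [← two_mul] at h7
    exact (h4.mul h7).mul_const _

/-- Difference quotient of `√F` along the flow, tested against `φ`: by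
`√a - √b = (a - b) / (√a + √b)`, Fubini and invariance of `ν`, the increments of `F` are
transferred to the fixed function `g`. -/
lemma integral_mul_sqrt_sub [IsFiniteMeasure ν] (hT : MPFlow ν T) {F g φ : X → ℝ}
    (hF : Measurable F) (hg : Measurable g) (hgi : Integrable g ν)
    (hFg : HasFlowDeriv ν T F g) {c M : ℝ} (hc : 0 < c) (hFc : ∀ᵐ p ∂ν, c ≤ F p)
    (hφ : Measurable φ) (hφM : ∀ p, |φ p| ≤ M) (h : ℝ) :
    ∫ p, φ p * (√(F (T h p)) - √(F p)) ∂ν =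
      h * ∫ u in Set.Ioc (0 : ℝ) 1, ∫ p, φ (T (-(h * u)) p) *
        (√(F (T (h - h * u) p)) + √(F (T (-(h * u)) p)))⁻¹ * g p ∂ν := by
  have hcT : ∀ θ, ∀ᵐ p ∂ν, c ≤ F (T θ p) := fun θ =>
    (hT.mp θ).quasiMeasurePreserving.ae hFc
  have hsc : 0 < √c := Real.sqrt_pos.2 hc
  have hTh := (hT.mp h).measurable
  set K : X → ℝ := fun p => φ p * (√(F (T h p)) + √(F p))⁻¹ with hK
  have hKm : Measurable K := by fun_prop
  have hKb : ∀ᵐ p ∂ν, ‖K p‖ ≤ M * (√c)⁻¹ := by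
    filter_upwards [hcT h] with p h1
    rw [hK, norm_mul, Real.norm_eq_abs, Real.norm_eq_abs]
    have h3 : √c ≤ √(F (T h p)) + √(F p) :=
      (Real.sqrt_le_sqrt h1).trans (le_add_of_nonneg_right (Real.sqrt_nonneg _))
    rw [abs_of_nonneg (a := (_ + _ : ℝ)⁻¹) (by positivity)]
    have hM : 0 ≤ M := (abs_nonneg _).trans (hφM p)
    gcongr
    exact hφM _
  have hprod : Integrable (fun q : ℝ × X => K q.2 * g (T (h * q.1) q.2))
      ((volume.restrict (Set.Ioc 0 1)).prod ν) := by
    refine (integrable_shear hT h hgi).bdd_mul (c := M * (√c)⁻¹)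
      (hKm.comp measurable_snd).aestronglyMeasurable ?_
    exact Measure.quasiMeasurePreserving_snd.ae hKb
  calc ∫ p, φ p * (√(F (T h p)) - √(F p)) ∂ν
      = ∫ p, h * (∫ u in Set.Ioc (0 : ℝ) 1, K p * g (T (h * u) p)) ∂ν := by
        refine integral_congr_ae ?_
        filter_upwards [hFg h, hcT h, hFc] with p h1 h2 h3
        rw [integral_const_mul, mul_left_comm, ← h1, hK]
        have e1 : 0 < √(F (T h p)) := Real.sqrt_pos.2 (hc.trans_le h2)
        have e2 : 0 < √(F p) := Real.sqrt_pos.2 (hc.trans_le h3)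
        have e3 := Real.mul_self_sqrt (hc.le.trans h2)
        have e4 := Real.mul_self_sqrt (hc.le.trans h3)
        have e5 : F (T h p) - F p = (√(F (T h p)) + √(F p)) * (√(F (T h p)) - √(F p)) := by
          linarith
        rw [e5]
        field_simp
    _ = h * ∫ u in Set.Ioc (0 : ℝ) 1, ∫ p, K p * g (T (h * u) p) ∂ν := by
        rw [integral_const_mul]
        congr 1
        exact (integral_integral_swap (f := fun u p => K p * g (T (h * u) p)) hprod).symm
    _ = _ := by
        congr 1
        refine integral_congr_ae (Eventually.of_forall fun u => ?_)
        have hm : Measurable fun p => K p * g (T (h * u) p) :=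
          hKm.mul (hg.comp (hT.mp _).measurable)
        simp only
        rw [← hT.integral_comp (-(h * u)) hm]
        refine integral_congr_ae (Eventually.of_forall fun p => ?_)
        simp only [hK, hT.neg_self, ← hT.add, sub_eq_add_neg]

/-- The chain rule for `√F` along a measure-preserving flow, where `φ` is a bounded test function,
Lipschitz along the flow, with derivative `φ'` along the flow. -/
theorem sqrt_chain [IsFiniteMeasure ν] (hT : MPFlow ν T) {F g φ φ' : X → ℝ}
    (hF : Measurable F) (hFi : Integrable F ν) (hg : Measurable g) (hgi : Integrable g ν)
    (hFg : HasFlowDeriv ν T F g) {c M C : ℝ} (hc : 0 < c) (hFc : ∀ᵐ p ∂ν, c ≤ F p)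
    (hφ : Measurable φ) (hφM : ∀ p, |φ p| ≤ M)
    (hφL : ∀ h p, |φ (T h p) - φ p| ≤ C * |h|)
    (hφ' : ∀ p, HasDerivAt (fun θ => φ (T θ p)) (φ' p) 0) :
    Integrable (fun p => φ p * (2 * √(F p))⁻¹ * g p) ν ∧ Integrable (fun p => √(F p) * φ' p) ν ∧
      ∫ p, φ p * (2 * √(F p))⁻¹ * g p ∂ν = -∫ p, √(F p) * φ' p ∂ν := by
  have hsc : 0 < √c := Real.sqrt_pos.2 hc
  have hsi : Integrable (fun p => √(F p)) ν := by
    refine Integrable.mono' (hFi.abs.add (integrable_const (1 : ℝ)))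
      hF.sqrt.aestronglyMeasurable (Eventually.of_forall fun p => ?_)
    rw [Real.norm_eq_abs, abs_of_nonneg (Real.sqrt_nonneg _), Pi.add_apply]
    refine Real.sqrt_le_iff.2 ⟨by positivity, ?_⟩
    nlinarith [le_abs_self (F p), abs_nonneg (F p), sq_nonneg (F p)]
  set t : ℕ → ℝ := fun n => 1 / ((n : ℝ) + 1) with ht
  have htpos : ∀ n, 0 < t n := fun n => by positivity
  have ht0 : Tendsto t atTop (𝓝 0) := tendsto_one_div_add_atTop_nhds_zero_nat
  have hnt0 : Tendsto (fun n => - t n) atTop (𝓝 0) := by simpa using ht0.neg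
  have hlim : ∀ p, Tendsto (fun n => (t n)⁻¹ * (φ (T (-t n) p) - φ p)) atTop (𝓝 (-φ' p)) := by
    intro p
    have h1 := (hφ' p).tendsto_slope
    have h2 : Tendsto (fun n => -t n) atTop (𝓝[≠] 0) :=
      tendsto_nhdsWithin_iff.2 ⟨hnt0, Eventually.of_forall fun n => by
        simpa using (htpos n).ne'⟩
    refine (h1.comp h2).neg.congr fun n => ?_
    have := (htpos n).ne'
    simp only [Function.comp, slope_def_field, hT.zero]
    rw [sub_zero, div_neg, neg_neg, div_eq_inv_mul]
  have hDb : ∀ n p, |(t n)⁻¹ * (φ (T (-t n) p) - φ p)| ≤ C := by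
    intro n p
    rw [abs_mul, abs_of_pos (inv_pos.2 (htpos n)), inv_mul_le_iff₀ (htpos n)]
    refine (hφL _ _).trans (le_of_eq ?_)
    rw [abs_neg, abs_of_pos (htpos n), mul_comm]
  have hDm : ∀ n, Measurable fun p => (t n)⁻¹ * (φ (T (-t n) p) - φ p) := fun n =>
    (((hφ.comp (hT.mp _).measurable).sub hφ).const_mul _)
  have hφ'm : Measurable φ' := by
    have : Measurable fun p => -φ' p :=
      measurable_of_tendsto_metrizable hDm (tendsto_pi_nhds.2 hlim)
    simpa [Pi.neg_def] using this.neg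
  have hφ'b : ∀ p, |φ' p| ≤ C := fun p => by
    have := le_of_tendsto (hlim p).abs (Eventually.of_forall fun n => hDb n p)
    simpa using this
  have hi2 : Integrable (fun p => √(F p) * φ' p) ν :=
    hsi.mul_bdd (c := C) hφ'm.aestronglyMeasurable (Eventually.of_forall hφ'b)
  have hkb : ∀ᵐ p ∂ν, ‖φ p * (2 * √(F p))⁻¹‖ ≤ M * (√c)⁻¹ := by
    filter_upwards [hFc] with p h1
    rw [norm_mul, Real.norm_eq_abs, Real.norm_eq_abs]
    have h3 : √c ≤ 2 * √(F p) := by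
      linarith [Real.sqrt_le_sqrt h1, Real.sqrt_nonneg (F p)]
    rw [abs_of_nonneg (a := (_ : ℝ)⁻¹) (by positivity)]
    have hM : 0 ≤ M := (abs_nonneg _).trans (hφM p)
    gcongr
    exact hφM _
  have hi1 : Integrable (fun p => φ p * (2 * √(F p))⁻¹ * g p) ν := by
    refine hgi.bdd_mul (c := M * (√c)⁻¹) ?_ hkb
    refine Measurable.aestronglyMeasurable ?_
    fun_prop
  refine ⟨hi1, hi2, ?_⟩
  have hφi : ∀ f : X → ℝ, Integrable f ν → Integrable (fun p => φ p * f p) ν := fun f hf =>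
    hf.bdd_mul (c := M) hφ.aestronglyMeasurable (Eventually.of_forall hφM)
  -- the difference quotients, written with the increments on `φ`
  have key1 : ∀ n, (t n)⁻¹ * ∫ p, φ p * (√(F (T (t n) p)) - √(F p)) ∂ν =
      ∫ p, √(F p) * ((t n)⁻¹ * (φ (T (-t n) p) - φ p)) ∂ν := by
    intro n
    have e1 : ∫ p, φ p * √(F (T (t n) p)) ∂ν = ∫ p, φ (T (-t n) p) * √(F p) ∂ν := by
      have hm : Measurable fun p => φ p * √(F (T (t n) p)) :=
        hφ.mul (hF.comp (hT.mp _).measurable).sqrt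
      rw [← hT.integral_comp (-t n) hm]
      simp only [hT.neg_self]
    have i1 := hφi _ (hT.integrable_comp (t n) hsi)
    have i2 := hφi _ hsi
    have i3 : Integrable (fun p => φ (T (-t n) p) * √(F p)) ν :=
      hsi.bdd_mul (c := M) (hφ.comp (hT.mp _).measurable).aestronglyMeasurable
        (Eventually.of_forall fun p => hφM _)
    simp only [mul_sub]
    rw [integral_sub i1 i2, e1, ← integral_sub i3 i2, ← integral_const_mul]
    congr 1
    ext p
    ring
  -- the first limit puts the derivative on `φ`, the second one (`lim2`) on `F`
  have lim1 : Tendsto (fun n => (t n)⁻¹ * ∫ p, φ p * (√(F (T (t n) p)) - √(F p)) ∂ν) atTop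
      (𝓝 (∫ p, √(F p) * (-φ' p) ∂ν)) := by
    simp only [key1]
    refine tendsto_integral_of_dominated_convergence (fun p => √(F p) * C) ?_ ?_ ?_ ?_
    · exact fun n => (hF.sqrt.mul (hDm n)).aestronglyMeasurable
    · exact hsi.mul_const _
    · refine fun n => Eventually.of_forall fun p => ?_
      rw [norm_mul, Real.norm_eq_abs, Real.norm_eq_abs, abs_of_nonneg (Real.sqrt_nonneg _)]
      exact mul_le_mul_of_nonneg_left (hDb n p) (Real.sqrt_nonneg _)
    · exact Eventually.of_forall fun p => (hlim p).const_mul _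
  have lim2 : Tendsto (fun n => (t n)⁻¹ * ∫ p, φ p * (√(F (T (t n) p)) - √(F p)) ∂ν) atTop
      (𝓝 (∫ _u in Set.Ioc (0 : ℝ) 1, ∫ p, φ p * (2 * √(F p))⁻¹ * g p ∂ν)) := by
    have e : ∀ n, (t n)⁻¹ * ∫ p, φ p * (√(F (T (t n) p)) - √(F p)) ∂ν =
        ∫ u in Set.Ioc (0 : ℝ) 1, ∫ p, φ (T (-(t n * u)) p) *
        (√(F (T (t n - t n * u) p)) + √(F (T (-(t n * u)) p)))⁻¹ * g p ∂ν := fun n => by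
      rw [integral_mul_sqrt_sub hT hF hg hgi hFg hc hFc hφ hφM,
        inv_mul_cancel_left₀ (htpos n).ne']
    simp only [e]
    refine tendsto_integral_of_dominated_convergence
      (fun _ => ∫ p, M * (√c)⁻¹ * |g p| ∂ν) ?_ ?_ ?_ ?_
    · intro n
      refine AEStronglyMeasurable.integral_prod_right' (f := fun q : ℝ × X =>
        φ (T (-(t n * q.1)) q.2) *
        (√(F (T (t n - t n * q.1) q.2)) + √(F (T (-(t n * q.1)) q.2)))⁻¹ * g q.2) ?_
      have m1 : Measurable fun q : ℝ × X => T (-(t n * q.1)) q.2 :=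
        hT.meas_comp (by fun_prop) measurable_snd
      have m2 : Measurable fun q : ℝ × X => T (t n - t n * q.1) q.2 :=
        hT.meas_comp (by fun_prop) measurable_snd
      exact (((hφ.comp m1).mul (((hF.comp m2).sqrt.add (hF.comp m1).sqrt).inv)).mul
        (hg.comp measurable_snd)).aestronglyMeasurable
    · exact integrable_const _
    · intro n
      refine Eventually.of_forall fun u => ?_
      refine norm_integral_le_of_norm_le (hgi.abs.const_mul _) ?_
      filter_upwards [(hT.mp (t n - t n * u)).quasiMeasurePreserving.ae hFc] with p h1
      rw [norm_mul, norm_mul, Real.norm_eq_abs, Real.norm_eq_abs, Real.norm_eq_abs]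
      have h3 : √c ≤ √(F (T (t n - t n * u) p)) + √(F (T (-(t n * u)) p)) :=
        (Real.sqrt_le_sqrt h1).trans (le_add_of_nonneg_right (Real.sqrt_nonneg _))
      rw [abs_of_nonneg (a := (_ + _ : ℝ)⁻¹) (by positivity)]
      have hM : 0 ≤ M := (abs_nonneg _).trans (hφM p)
      gcongr
      exact hφM _
    · refine Eventually.of_forall fun u => ?_
      refine tendsto_inner hT hF hg hgi hFg hc hFc hφ hφM hφL ?_ ?_
      · simpa using ht0.sub (ht0.mul_const u)
      · simpa using (ht0.mul_const u).neg
  have := tendsto_nhds_unique lim2 lim1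
  simpa [integral_neg] using this

end MPFlow

/-! ### Generators of rotations -/

/-- The skew-symmetric generator of the rotations in the `(k, k + 1)` coordinate plane. -/
def rotGen (k : Fin 3) : E3 →L[ℝ] E3 :=
  (EuclideanSpace.proj (k + 1)).smulRight (EuclideanSpace.single k (1 : ℝ)) -
    (EuclideanSpace.proj k).smulRight (EuclideanSpace.single (k + 1) (1 : ℝ))

lemma rotGen_apply (k : Fin 3) (z : E3) : rotGen k z =
    z (k + 1) • EuclideanSpace.single k (1 : ℝ) - z k • EuclideanSpace.single (k + 1) (1 : ℝ) := by
  simp [rotGen]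

/-- Skew-symmetry of a linear map with respect to the Euclidean inner product. -/
def IsSkew (J : E3 →L[ℝ] E3) : Prop := ∀ x y : E3, ⟪J x, y⟫ = -⟪x, J y⟫

lemma isSkew_rotGen (k : Fin 3) : IsSkew (rotGen k) := by
  intro x y
  simp only [rotGen_apply, inner_sub_left, inner_sub_right, real_inner_smul_left,
    real_inner_smul_right, EuclideanSpace.inner_single_left, EuclideanSpace.inner_single_right]
  simp
  ring

lemma IsSkew.inner_self {J : E3 →L[ℝ] E3} (hJ : IsSkew J) (x : E3) : ⟪x, J x⟫ = 0 := by
  have h := hJ x x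
  rw [real_inner_comm] at h
  linarith

/-- Lagrange's identity, summed over the three coordinate planes. -/
lemma sum_rotGen_mul (a b z : E3) :
    ∑ k, ⟪a, rotGen k z⟫ * ⟪b, rotGen k z⟫ = ‖z‖ ^ 2 * ⟪a, b⟫ - ⟪a, z⟫ * ⟪b, z⟫ := by
  rw [EuclideanSpace.real_norm_sq_eq]
  simp only [rotGen_apply, inner_sub_right, real_inner_smul_right,
    EuclideanSpace.inner_single_right]
  simp [Fin.sum_univ_three, PiLp.inner_apply]
  ring

/-- The divergence of the projected field, expressed through derivatives along rotations. -/
lemma sum_rotGen_deriv (A : E3 →L[ℝ] E3) (a z : E3) :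
    ∑ k, (⟪A (rotGen k z), rotGen k z⟫ + ⟪a, rotGen k (rotGen k z)⟫) =
      ‖z‖ ^ 2 * (∑ i, A (EuclideanSpace.single i 1) i) - ⟪z, A z⟫ - 2 * ⟪a, z⟫ := by
  have hz : z = ∑ i, z i • EuclideanSpace.single i (1 : ℝ) := by
    ext j
    fin_cases j <;> simp [Fin.sum_univ_three]
  have hA : A z = ∑ i, z i • A (EuclideanSpace.single i (1 : ℝ)) := by
    conv_lhs => rw [hz]
    simp
  rw [EuclideanSpace.real_norm_sq_eq, hA]
  simp only [rotGen_apply, inner_sub_right, real_inner_smul_right, map_sub, map_smul,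
    EuclideanSpace.inner_single_right]
  simp [Fin.sum_univ_three, PiLp.inner_apply]
  ring

/-! ### The rotation flow -/

section RotationFlow

variable {N : ℕ}

local notation "EN" => EuclideanSpace ℝ (Fin N)

/-- The flow `(y, z) ↦ (y, exp(θJ) z)`, acting on the second variable only. -/
def rotFlow (N : ℕ) (J : E3 →L[ℝ] E3) (θ : ℝ) (p : EuclideanSpace ℝ (Fin N) × E3) :
    EuclideanSpace ℝ (Fin N) × E3 :=
  (p.1, NormedSpace.exp (θ • J) p.2)

variable {J : E3 →L[ℝ] E3}

lemma exp_mem_unitary (hJ : IsSkew J) (θ : ℝ) :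
    NormedSpace.exp (θ • J) ∈ unitary (E3 →L[ℝ] E3) := by
  let : NormedAlgebra ℚ (E3 →L[ℝ] E3) := .restrictScalars ℚ ℝ _
  refine NormedSpace.exp_mem_unitary_of_mem_skewAdjoint ?_
  rw [skewAdjoint.mem_iff, ContinuousLinearMap.star_eq_adjoint, eq_comm,
    ContinuousLinearMap.eq_adjoint_iff]
  intro x y
  have := hJ x y
  simp [real_inner_smul_left, real_inner_smul_right, this]

lemma norm_exp_apply (hJ : IsSkew J) (θ : ℝ) (z : E3) : ‖NormedSpace.exp (θ • J) z‖ = ‖z‖ :=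
  ContinuousLinearMap.norm_map_of_mem_unitary (exp_mem_unitary hJ θ) z

lemma norm_rotFlow (hJ : IsSkew J) (θ : ℝ) (p : EN × E3) : ‖rotFlow N J θ p‖ = ‖p‖ := by
  simp [rotFlow, Prod.norm_def, norm_exp_apply hJ]

lemma hasDerivAt_exp_rot (J : E3 →L[ℝ] E3) (θ : ℝ) (z : E3) :
    HasDerivAt (fun t : ℝ => NormedSpace.exp (t • J) z) (J (NormedSpace.exp (θ • J) z)) θ := by
  have h := hasDerivAt_exp_smul_const' (𝕂 := ℝ) J θ
  simpa using h.clm_apply (hasDerivAt_const θ z)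

lemma hasDerivAt_rotFlow (J : E3 →L[ℝ] E3) (θ : ℝ) (p : EN × E3) :
    HasDerivAt (fun t : ℝ => rotFlow N J t p) (0, J (rotFlow N J θ p).2) θ :=
  (hasDerivAt_const θ p.1).prodMk (hasDerivAt_exp_rot J θ p.2)

lemma continuous_rotFlow (J : E3 →L[ℝ] E3) :
    Continuous fun q : ℝ × (EN × E3) => rotFlow N J q.1 q.2 := by
  have h1 : Continuous fun t : ℝ => NormedSpace.exp (t • J) :=
    continuous_iff_continuousAt.2 fun t => (hasDerivAt_exp_smul_const' (𝕂 := ℝ) J t).continuousAt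
  have h2 : Continuous fun q : ℝ × (EN × E3) => NormedSpace.exp (q.1 • J) q.2.2 :=
    (h1.comp continuous_fst).clm_apply (by fun_prop)
  exact Continuous.prodMk (by fun_prop) h2

/-- The truncation of `Y × ℝ³` to the open ball of radius `R`, as a measure. -/
def cylMeasure (Y : Set EN) (R : ℝ) : Measure (EN × E3) :=
  volume.restrict ((Y ×ˢ (Set.univ : Set E3)) ∩ Metric.ball 0 R)

instance (Y : Set EN) (R : ℝ) : IsFiniteMeasure (cylMeasure Y R) := by
  refine ⟨?_⟩
  rw [cylMeasure, Measure.restrict_apply_univ]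
  exact (measure_mono Set.inter_subset_right).trans_lt Metric.isBounded_ball.measure_lt_top

lemma mpFlow_rotFlow (hJ : IsSkew J) {Y : Set EN} (hY : MeasurableSet Y) (R : ℝ) :
    MPFlow (cylMeasure Y R) (rotFlow N J) where
  zero p := by
    let : NormedAlgebra ℚ (E3 →L[ℝ] E3) := .restrictScalars ℚ ℝ _
    have h : (0 : ℝ) • J = 0 := zero_smul ℝ J
    simp [rotFlow, h, NormedSpace.exp_zero]
  add a b p := by
    have hc : Commute (a • J) (b • J) := by
      ext1 z
      simp [smul_smul, mul_comm]
    let : NormedAlgebra ℚ (E3 →L[ℝ] E3) := .restrictScalars ℚ ℝ _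
    have h : NormedSpace.exp ((a + b) • J) = NormedSpace.exp (a • J) * NormedSpace.exp (b • J) := by
      rw [show (a + b) • J = a • J + b • J from add_smul a b J,
        NormedSpace.exp_add_of_commute hc]
    simp only [rotFlow, h, mul_apply_eq_comp]
  meas := (continuous_rotFlow J).measurable
  mp θ := by
    have h1 : MeasurePreserving (fun z : E3 => NormedSpace.exp (θ • J) z) volume volume :=
      (Unitary.linearIsometryEquiv ⟨_, exp_mem_unitary hJ θ⟩).measurePreserving
    have h2 : MeasurePreserving (rotFlow N J θ) volume volume :=
      (MeasurePreserving.id (volume : Measure EN)).prod h1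
    have hS : MeasurableSet ((Y ×ˢ (Set.univ : Set E3)) ∩ Metric.ball (0 : EN × E3) R) :=
      (hY.prod MeasurableSet.univ).inter Metric.isOpen_ball.measurableSet
    have h3 := h2.restrict_preimage hS
    have h4 : rotFlow N J θ ⁻¹' ((Y ×ˢ (Set.univ : Set E3)) ∩ Metric.ball (0 : EN × E3) R) =
        (Y ×ˢ (Set.univ : Set E3)) ∩ Metric.ball (0 : EN × E3) R := by
      ext p
      simp only [Set.mem_preimage, Set.mem_inter_iff, Set.mem_prod, Set.mem_univ, and_true,
        mem_ball_zero_iff, norm_rotFlow hJ]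
      rfl
    rw [h4] at h3
    exact h3

lemma setIntegral_eq_cylMeasure {Y : Set EN} (hY : MeasurableSet Y) {R : ℝ} {f : EN × E3 → ℝ}
    (hf : ∀ p, p ∉ Metric.ball (0 : EN × E3) R → f p = 0) :
    ∫ p in Y ×ˢ (Set.univ : Set E3), f p = ∫ p, f p ∂(cylMeasure Y R) := by
  have hS : MeasurableSet (Y ×ˢ (Set.univ : Set E3)) := hY.prod MeasurableSet.univ
  rw [cylMeasure]
  refine setIntegral_eq_of_subset_of_forall_sdiff_eq_zero hS Set.inter_subset_left ?_
  rintro p ⟨h1, h2⟩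
  exact hf p fun h => h2 ⟨h1, h⟩

lemma testC_smul {φ : EN × E3 → ℝ} (hφ : ContDiff ℝ 1 φ) (hc : HasCompactSupport φ)
    (J : E3 →L[ℝ] E3) : TestC N fun p => φ p • J p.2 := by
  have hΨ : ContDiff ℝ 1 fun p : EN × E3 => φ p • J p.2 := by fun_prop
  have hΨc : HasCompactSupport fun p : EN × E3 => φ p • J p.2 := hc.smul_right
  refine ⟨hΨ.continuous, hΨc, by simp, fun y => hΨ.comp (contDiff_prodMk_right y), ?_⟩
  obtain ⟨C, hC⟩ := (hΨ.continuous_fderiv one_ne_zero).bounded_above_of_compact_support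
    (hΨc.fderiv ℝ)
  refine ⟨C * ‖ContinuousLinearMap.inr ℝ EN E3‖, fun y z => ?_⟩
  have h := ((hΨ.differentiable one_ne_zero (y, z)).hasFDerivAt.comp z
    (hasFDerivAt_prodMk_right y z)).fderiv
  simp only [Function.comp_def] at h
  rw [h]
  exact (ContinuousLinearMap.opNorm_comp_le _ _).trans
    (mul_le_mul_of_nonneg_right (hC _) (norm_nonneg _))

/-- A multiple of a rotation field is tangential, and the rotation field has no divergence. -/
lemma divPi_smul {φ : EN × E3 → ℝ} (hφ : ContDiff ℝ 1 φ) (hJ : IsSkew J) (p : EN × E3) :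
    divPi N (fun p => φ p • J p.2) p.1 p.2 = fderiv ℝ φ p (0, J p.2) := by
  obtain ⟨y, z⟩ := p
  have h1 : HasFDerivAt (fun w => φ (y, w))
      ((fderiv ℝ φ (y, z)).comp (ContinuousLinearMap.inr ℝ EN E3)) z :=
    (hφ.differentiable one_ne_zero (y, z)).hasFDerivAt.comp z (hasFDerivAt_prodMk_right y z)
  have h2 : fderiv ℝ (fun w => φ (y, w) • J w) z = φ (y, z) • J +
      ((fderiv ℝ φ (y, z)).comp (ContinuousLinearMap.inr ℝ EN E3)).smulRight (J z) :=
    (h1.smul J.hasFDerivAt).fderiv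
  have hd : ∀ i, (J (EuclideanSpace.single i 1 : E3)) i = 0 := fun i => by
    simpa [EuclideanSpace.inner_single_left] using hJ.inner_self (EuclideanSpace.single i 1)
  have h3 : fderiv ℝ φ (y, z) (0, J z) =
      ∑ i, (J z) i * fderiv ℝ φ (y, z) (0, EuclideanSpace.single i 1) := by
    have hz : J z = ∑ i, (J z) i • EuclideanSpace.single i (1 : ℝ) := by
      ext j
      fin_cases j <;> simp [Fin.sum_univ_three]
    have h4 : ((0 : EN), J z) = ∑ i, (J z) i • ((0 : EN), EuclideanSpace.single i (1 : ℝ)) := by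
      conv_lhs => rw [hz]
      simp [Fin.sum_univ_three]
    rw [h4, map_sum]
    exact Finset.sum_congr rfl fun i _ => by rw [map_smul, smul_eq_mul]
  have h5 := hJ.inner_self z
  have h5' : ⟪J z, z⟫ = 0 := by rw [real_inner_comm, h5]
  simp only [divPi, h2, h3]
  simp [Fin.sum_univ_three, hd, inner_add_right, real_inner_smul_left,
    real_inner_smul_right, h5, h5', mul_comm]

end RotationFlow

/-! ### The derivative of `F` along rotations -/

section WeakDerivative

variable {N : ℕ} {J : E3 →L[ℝ] E3}

local notation "EN" => EuclideanSpace ℝ (Fin N)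

/-- Tested against `C¹` functions supported in the open ball, `g = D · Jz` is the weak
derivative of `F` along the rotation flow generated by `J`. -/
lemma weak_rot {Y : Set EN} (hY : MeasurableSet Y) {F : EN × E3 → ℝ} {D : EN × E3 → E3}
    (hweak : ∀ Ψ, TestC N Ψ →
      (∫ p in Y ×ˢ (Set.univ : Set E3), ⟪Ψ p, D p⟫) =
        -∫ p in Y ×ˢ (Set.univ : Set E3), F p * divPi N Ψ p.1 p.2)
    (hJ : IsSkew J) {R : ℝ} {φ : EN × E3 → ℝ} (hφ : ContDiff ℝ 1 φ)
    (hR : tsupport φ ⊆ Metric.ball 0 R) :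
    ∫ p, φ p * ⟪D p, J p.2⟫ ∂(cylMeasure Y R) =
      -∫ p, F p * fderiv ℝ φ p (0, J p.2) ∂(cylMeasure Y R) := by
  have hc : HasCompactSupport φ := Metric.isCompact_of_isClosed_isBounded (isClosed_tsupport φ)
    (Metric.isBounded_ball.subset hR)
  have h := hweak _ (testC_smul hφ hc J)
  simp only [divPi_smul hφ hJ] at h
  rw [setIntegral_eq_cylMeasure (R := R) hY, setIntegral_eq_cylMeasure (R := R) hY] at h
  · have e : ∀ p, φ p * ⟪D p, J p.2⟫ = ⟪φ p • J p.2, D p⟫ := fun p => by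
      rw [real_inner_smul_left, real_inner_comm]
    simpa only [e] using h
  · intro p hp
    rw [image_eq_zero_of_notMem_tsupport
      (fun h => hp (hR (tsupport_fderiv_subset ℝ h)))]
    simp
  · intro p hp
    rw [image_eq_zero_of_notMem_tsupport (fun h => hp (hR h))]
    simp

lemma contDiff_rotFlow (J : E3 →L[ℝ] E3) (θ : ℝ) : ContDiff ℝ 1 (rotFlow N J θ) := by
  unfold rotFlow
  fun_prop

lemma fderiv_comp_rotFlow {φ : EN × E3 → ℝ} (hφ : ContDiff ℝ 1 φ) (θ : ℝ) (p : EN × E3) :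
    fderiv ℝ (fun q => φ (rotFlow N J θ q)) p (0, J p.2) =
      fderiv ℝ φ (rotFlow N J θ p) (0, J (rotFlow N J θ p).2) := by
  have h1 : HasFDerivAt (rotFlow N J θ) ((ContinuousLinearMap.fst ℝ EN E3).prod
      ((NormedSpace.exp (θ • J)).comp (ContinuousLinearMap.snd ℝ EN E3))) p :=
    ((ContinuousLinearMap.fst ℝ EN E3).prod
      ((NormedSpace.exp (θ • J)).comp (ContinuousLinearMap.snd ℝ EN E3))).hasFDerivAt
  have h2 : fderiv ℝ (fun q => φ (rotFlow N J θ q)) p = _ :=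
    ((hφ.differentiable one_ne_zero _).hasFDerivAt.comp p h1).fderiv
  have h3 : NormedSpace.exp (θ • J) (J p.2) = J (NormedSpace.exp (θ • J) p.2) := by
    let : NormedAlgebra ℚ (E3 →L[ℝ] E3) := .restrictScalars ℚ ℝ _
    have hc : Commute J (θ • J) := by
      ext1 z
      simp
    exact (DFunLike.congr_fun (Commute.exp_right hc) p.2).symm
  rw [h2]
  simp [rotFlow, h3]

/-- Integrated form of the derivative along rotations: the weak derivative is upgraded to the
almost everywhere identity `F ∘ T_h - F = ∫₀ʰ g ∘ T_s ds`. -/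
lemma hasFlowDeriv_rot {Y : Set EN} (hY : MeasurableSet Y) {F : EN × E3 → ℝ}
    {D : EN × E3 → E3} (hF : Measurable F) (hD : Measurable D)
    (hweak : ∀ Ψ, TestC N Ψ →
      (∫ p in Y ×ˢ (Set.univ : Set E3), ⟪Ψ p, D p⟫) =
        -∫ p in Y ×ˢ (Set.univ : Set E3), F p * divPi N Ψ p.1 p.2)
    (hJ : IsSkew J) {R : ℝ} (hFi : Integrable F (cylMeasure Y R))
    (hgi : Integrable (fun p => ⟪D p, J p.2⟫) (cylMeasure Y R)) :
    MPFlow.HasFlowDeriv (cylMeasure Y R) (rotFlow N J) F (fun p => ⟪D p, J p.2⟫) := by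
  intro h
  set ν := cylMeasure Y R with hν
  set g : EN × E3 → ℝ := fun p => ⟪D p, J p.2⟫ with hg
  have hgm : Measurable g := hD.inner (J.measurable.comp measurable_snd)
  have hT : MPFlow ν (rotFlow N J) := mpFlow_rotFlow hJ hY R
  have hTc : ∀ p : EN × E3, Continuous fun θ : ℝ => rotFlow N J (-θ) p := fun p =>
    (continuous_rotFlow J).comp (by fun_prop : Continuous fun θ : ℝ => (-θ, p))
  have hsh := hT.integrable_shear h hgi
  have hai : Integrable (fun p => ∫ u in Set.Ioc (0 : ℝ) 1, g (rotFlow N J (h * u) p)) ν :=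
    hsh.integral_prod_right
  have hloc : Integrable (fun p => F (rotFlow N J h p) - F p -
      h * ∫ u in Set.Ioc (0 : ℝ) 1, g (rotFlow N J (h * u) p)) ν :=
    ((hT.integrable_comp h hFi).sub hFi).sub (hai.const_mul h)
  have key : ∀ᵐ p ∂ν, p ∈ Metric.ball (0 : EN × E3) R → F (rotFlow N J h p) - F p -
      h * ∫ u in Set.Ioc (0 : ℝ) 1, g (rotFlow N J (h * u) p) = 0 := by
    refine IsOpen.ae_eq_zero_of_integral_contDiff_smul_eq_zero Metric.isOpen_ball
      (hloc.locallyIntegrable.locallyIntegrableOn _) ?_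
    intro φ hφ' hφc hφR
    have hφ : ContDiff ℝ 1 φ := hφ'.of_le (by exact_mod_cast le_top)
    obtain ⟨M, hM⟩ := hφ.continuous.bounded_above_of_compact_support hφc
    have hdc : Continuous fun p : EN × E3 => fderiv ℝ φ p (0, J p.2) :=
      (hφ.continuous_fderiv one_ne_zero).clm_apply (by fun_prop)
    obtain ⟨C, hC⟩ := hdc.bounded_above_of_compact_support
      (f := fun p : EN × E3 => fderiv ℝ φ p (0, J p.2))
      ((hφc.fderiv ℝ).mono' fun p hp => subset_tsupport _ fun h0 => hp (by simp [h0]))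
    have hφi : ∀ f : EN × E3 → ℝ, Integrable f ν → Integrable (fun p => φ p * f p) ν :=
      fun f hf => hf.bdd_mul (c := M) hφ.continuous.aestronglyMeasurable (Eventually.of_forall hM)
    have hφTi : ∀ θ, ∀ f : EN × E3 → ℝ, Integrable f ν →
        Integrable (fun p => φ (rotFlow N J θ p) * f p) ν :=
      fun θ f hf => hf.bdd_mul (c := M)
        (hφ.continuous.measurable.comp (hT.mp θ).measurable).aestronglyMeasurable
        (Eventually.of_forall fun p => hM _)
    -- `m` transports the test function; its derivative is given by the weak formulation
    set m : ℝ → ℝ := fun θ => ∫ p, φ (rotFlow N J (-θ) p) * F p ∂ν with hm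
    set m' : ℝ → ℝ := fun θ => ∫ p, φ (rotFlow N J (-θ) p) * g p ∂ν with hm'
    have hderiv : ∀ θ, HasDerivAt m (m' θ) θ := by
      intro θ
      have h1 := hasDerivAt_integral_of_dominated_loc_of_deriv_le (μ := ν) (s := Set.univ)
        (F := fun θ p => φ (rotFlow N J (-θ) p) * F p)
        (F' := fun θ p => -(fderiv ℝ φ (rotFlow N J (-θ) p)
          (0, J (rotFlow N J (-θ) p).2)) * F p) (bound := fun p => C * |F p|) (x₀ := θ)
        univ_mem
        (Eventually.of_forall fun θ => (hφTi (-θ) F hFi).aestronglyMeasurable)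
        (hφTi (-θ) F hFi)
        (((hdc.measurable.comp (hT.mp (-θ)).measurable).neg.mul hF).aestronglyMeasurable)
        (Eventually.of_forall fun p x _ => by
          rw [norm_mul, norm_neg]
          exact mul_le_mul_of_nonneg_right (hC _) (norm_nonneg _))
        (hFi.abs.const_mul C)
        (Eventually.of_forall fun p x _ => by
          have e1 := (hasDerivAt_rotFlow J (-x) p).scomp x (hasDerivAt_neg x)
          have e2 := ((hφ.differentiable one_ne_zero
            (rotFlow N J (-x) p)).hasFDerivAt.comp_hasDerivAt x e1).mul_const (F p)
          refine e2.congr_deriv ?_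
          rw [map_smul]
          simp)
      refine h1.2.congr_deriv ?_
      have hφθ : ContDiff ℝ 1 fun q => φ (rotFlow N J (-θ) q) := hφ.comp (contDiff_rotFlow J _)
      have hsub : tsupport (fun q => φ (rotFlow N J (-θ) q)) ⊆ Metric.ball 0 R := by
        intro p hp
        have h2 := hφR (tsupport_comp_subset_preimage φ (contDiff_rotFlow J (-θ)).continuous hp)
        rw [mem_ball_zero_iff, norm_rotFlow hJ] at h2
        exact mem_ball_zero_iff.2 h2
      have h3 := weak_rot hY hweak hJ hφθ hsub
      simp only [fderiv_comp_rotFlow hφ] at h3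
      rw [hm', ← hν] at *
      simp only [hg]
      rw [h3, ← integral_neg]
      congr 1
      ext p
      ring
    have hcont : Continuous m' := by
      refine continuous_of_dominated (bound := fun p => M * |g p|)
        (fun θ => (hφTi (-θ) g hgi).aestronglyMeasurable)
        (fun θ => Eventually.of_forall fun p => ?_) (hgi.abs.const_mul M)
        (Eventually.of_forall fun p => ?_)
      · rw [norm_mul]
        exact mul_le_mul_of_nonneg_right (hM _) (norm_nonneg _)
      · exact (hφ.continuous.comp (hTc p)).mul continuous_const
    have hFTC : m h - m 0 = h * ∫ u in Set.Ioc (0 : ℝ) 1, m' (h * u) := by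
      rw [← intervalIntegral.integral_eq_sub_of_hasDerivAt (fun x _ => hderiv x)
        (hcont.intervalIntegrable _ _), ← intervalIntegral.integral_of_le zero_le_one,
        intervalIntegral.mul_integral_comp_mul_left]
      simp
    have e1 : ∀ θ, ∀ f : EN × E3 → ℝ, Measurable f →
        ∫ p, φ (rotFlow N J (-θ) p) * f p ∂ν = ∫ p, φ p * f (rotFlow N J θ p) ∂ν := by
      intro θ f hf
      have hmeas : Measurable fun p => φ p * f (rotFlow N J θ p) :=
        hφ.continuous.measurable.mul (hf.comp (hT.mp θ).measurable)
      rw [← hT.integral_comp (-θ) hmeas]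
      simp only [hT.neg_self]
    have e2 : ∫ p, φ p * (∫ u in Set.Ioc (0 : ℝ) 1, g (rotFlow N J (h * u) p)) ∂ν =
        ∫ u in Set.Ioc (0 : ℝ) 1, m' (h * u) := by
      have hprod : Integrable (fun q : ℝ × (EN × E3) => φ q.2 * g (rotFlow N J (h * q.1) q.2))
          ((volume.restrict (Set.Ioc 0 1)).prod ν) :=
        hsh.bdd_mul (c := M) (hφ.continuous.comp continuous_snd).aestronglyMeasurable
          (Eventually.of_forall fun q => hM _)
      have h1 := integral_integral_swap
        (f := fun u p => φ p * g (rotFlow N J (h * u) p)) hprod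
      simp only [hm', e1 _ g hgm]
      rw [h1]
      simp only [integral_const_mul]
    have e3 : m h = ∫ p, φ p * F (rotFlow N J h p) ∂ν := e1 h F hF
    have e4 : m 0 = ∫ p, φ p * F p ∂ν := by simp only [hm, neg_zero, hT.zero]
    simp only [smul_eq_mul, mul_sub]
    have i1 : Integrable (fun p => φ p * F (rotFlow N J h p) - φ p * F p) ν :=
      (hφi _ (hT.integrable_comp h hFi)).sub (hφi _ hFi)
    rw [integral_sub i1 (hφi _ (hai.const_mul h)),
      integral_sub (hφi _ (hT.integrable_comp h hFi)) (hφi _ hFi), ← e3, ← e4, hFTC, ← e2,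
      ← integral_const_mul, sub_eq_zero]
    congr 1
    ext p
    ring
  have hball : ∀ᵐ p ∂ν, p ∈ Metric.ball (0 : EN × E3) R :=
    (ae_restrict_mem ((hY.prod MeasurableSet.univ).inter
      Metric.isOpen_ball.measurableSet)).mono fun p hp => hp.2
  filter_upwards [key, hball] with p h1 h2
  exact sub_eq_zero.1 (h1 h2)

end WeakDerivative

/-! ### The coefficients of the projected test field -/

section TestFunctions

variable {N : ℕ} {J : E3 →L[ℝ] E3} {Ψ : EuclideanSpace ℝ (Fin N) × E3 → E3}

local notation "EN" => EuclideanSpace ℝ (Fin N)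

/-- The coefficient `(Ψ · Jz) / |z|²` of the rotation field `Jz` in the projected field `Π(z)Ψ`. -/
def rotCoeff (J : E3 →L[ℝ] E3) (Ψ : EN × E3 → E3) (p : EN × E3) : ℝ :=
  ⟪Ψ p, J p.2⟫ / ‖p.2‖ ^ 2

/-- The derivative of `rotCoeff J Ψ` along the rotation field `Jz`; the radial weight is constant
along rotations. -/
def rotCoeffDeriv (J : E3 →L[ℝ] E3) (Ψ : EN × E3 → E3) (p : EN × E3) : ℝ :=
  (⟪fderiv ℝ (fun w => Ψ (p.1, w)) p.2 (J p.2), J p.2⟫ + ⟪Ψ p, J (J p.2)⟫) / ‖p.2‖ ^ 2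

lemma TestC.norm_le {C : ℝ} (hΨ : TestC N Ψ)
    (hC : ∀ y z, ‖fderiv ℝ (fun w => Ψ (y, w)) z‖ ≤ C) (p : EN × E3) : ‖Ψ p‖ ≤ C * ‖p.2‖ := by
  obtain ⟨y, z⟩ := p
  have h := (convex_univ (𝕜 := ℝ) (E := E3)).norm_image_sub_le_of_norm_fderiv_le (𝕜 := ℝ)
    (f := fun w => Ψ (y, w)) (x := 0) (y := z) (C := C)
    (fun w _ => (hΨ.2.2.2.1 y).differentiable one_ne_zero w) (fun w _ => hC y w)
    (Set.mem_univ _) (Set.mem_univ _)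
  simpa [hΨ.2.2.1 y] using h

lemma abs_rotCoeff_le {C : ℝ} (hΨ : TestC N Ψ)
    (hC : ∀ y z, ‖fderiv ℝ (fun w => Ψ (y, w)) z‖ ≤ C) (p : EN × E3) :
    |rotCoeff J Ψ p| ≤ C * ‖J‖ := by
  have hC0 : 0 ≤ C := (norm_nonneg _).trans (hC p.1 p.2)
  rw [rotCoeff, abs_div, abs_of_nonneg (sq_nonneg ‖p.2‖)]
  refine div_le_of_le_mul₀ (sq_nonneg _) (by positivity) ?_
  calc |⟪Ψ p, J p.2⟫| ≤ ‖Ψ p‖ * ‖J p.2‖ := abs_real_inner_le_norm _ _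
    _ ≤ (C * ‖p.2‖) * (‖J‖ * ‖p.2‖) := by
        gcongr
        · exact hΨ.norm_le hC p
        · exact J.le_opNorm _
    _ = C * ‖J‖ * ‖p.2‖ ^ 2 := by ring

lemma abs_rotCoeffDeriv_le {C : ℝ} (hΨ : TestC N Ψ)
    (hC : ∀ y z, ‖fderiv ℝ (fun w => Ψ (y, w)) z‖ ≤ C) (p : EN × E3) :
    |rotCoeffDeriv J Ψ p| ≤ 2 * C * ‖J‖ ^ 2 := by
  have hC0 : 0 ≤ C := (norm_nonneg _).trans (hC p.1 p.2)
  rw [rotCoeffDeriv, abs_div, abs_of_nonneg (sq_nonneg ‖p.2‖)]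
  refine div_le_of_le_mul₀ (sq_nonneg _) (by positivity) ?_
  have hJz := J.le_opNorm p.2
  have h1 : |⟪fderiv ℝ (fun w => Ψ (p.1, w)) p.2 (J p.2), J p.2⟫| ≤
      (C * (‖J‖ * ‖p.2‖)) * (‖J‖ * ‖p.2‖) := by
    refine (abs_real_inner_le_norm _ _).trans ?_
    gcongr
    refine (ContinuousLinearMap.le_opNorm _ _).trans ?_
    gcongr
    exact hC _ _
  have h2 : |⟪Ψ p, J (J p.2)⟫| ≤ (C * ‖p.2‖) * (‖J‖ * (‖J‖ * ‖p.2‖)) := by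
    refine (abs_real_inner_le_norm _ _).trans ?_
    gcongr
    · exact hΨ.norm_le hC p
    · refine (J.le_opNorm _).trans ?_
      gcongr
  refine (abs_add_le _ _).trans ((add_le_add h1 h2).trans (le_of_eq ?_))
  ring

lemma hasDerivAt_rotCoeff (hΨ : TestC N Ψ) (hJ : IsSkew J) (θ : ℝ) (p : EN × E3) :
    HasDerivAt (fun t => rotCoeff J Ψ (rotFlow N J t p))
      (rotCoeffDeriv J Ψ (rotFlow N J θ p)) θ := by
  have h0 := hasDerivAt_exp_rot J θ p.2
  have h1 := ((hΨ.2.2.2.1 p.1).differentiable one_ne_zero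
    (NormedSpace.exp (θ • J) p.2)).hasFDerivAt.comp_hasDerivAt θ h0
  have h2 := J.hasFDerivAt.comp_hasDerivAt θ h0
  have h3 := (h1.inner ℝ h2).div_const (‖p.2‖ ^ 2)
  have e : (fun t => rotCoeff J Ψ (rotFlow N J t p)) = fun t =>
      ⟪((fun w => Ψ (p.1, w)) ∘ fun t : ℝ => NormedSpace.exp (t • J) p.2) t,
        (J ∘ fun t : ℝ => NormedSpace.exp (t • J) p.2) t⟫ / ‖p.2‖ ^ 2 := by
    ext t
    simp [rotCoeff, rotFlow, norm_exp_apply hJ]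
  rw [e]
  refine h3.congr_deriv ?_
  simp only [rotCoeffDeriv, rotFlow, norm_exp_apply hJ, Function.comp]
  rw [add_comm]

lemma rotCoeff_lipschitz {C : ℝ} (hΨ : TestC N Ψ)
    (hC : ∀ y z, ‖fderiv ℝ (fun w => Ψ (y, w)) z‖ ≤ C) (hJ : IsSkew J) (h : ℝ) (p : EN × E3) :
    |rotCoeff J Ψ (rotFlow N J h p) - rotCoeff J Ψ p| ≤ 2 * C * ‖J‖ ^ 2 * |h| := by
  have h1 := (convex_univ (𝕜 := ℝ) (E := ℝ)).norm_image_sub_le_of_norm_hasDerivWithin_le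
    (f := fun t => rotCoeff J Ψ (rotFlow N J t p)) (x := 0) (y := h) (C := 2 * C * ‖J‖ ^ 2)
    (fun t _ => (hasDerivAt_rotCoeff hΨ hJ t p).hasDerivWithinAt)
    (fun t _ => abs_rotCoeffDeriv_le hΨ hC _) (Set.mem_univ _) (Set.mem_univ _)
  have h0 : rotFlow N J 0 p = p := (mpFlow_rotFlow hJ MeasurableSet.univ 1).zero p
  simpa [h0] using h1

/-- Decomposition of the pairing with a tangential vector `d` along the rotation fields. -/
lemma sum_rotCoeff_mul (Ψ : EN × E3 → E3) (p : EN × E3) (hp : p.2 ≠ 0) {d : E3}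
    (hd : ⟪d, p.2⟫ = 0) : ∑ k, rotCoeff (rotGen k) Ψ p * ⟪d, rotGen k p.2⟫ = ⟪Ψ p, d⟫ := by
  have h := sum_rotGen_mul (Ψ p) d p.2
  have hn : ‖p.2‖ ≠ 0 := norm_ne_zero_iff.2 hp
  rw [hd, mul_zero, sub_zero] at h
  simp only [rotCoeff, div_mul_eq_mul_div]
  rw [← Finset.sum_div, h]
  field_simp

lemma sum_rotCoeffDeriv (Ψ : EN × E3 → E3) (p : EN × E3) (hp : p.2 ≠ 0) :
    ∑ k, rotCoeffDeriv (rotGen k) Ψ p = divPi N Ψ p.1 p.2 := by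
  have hn : ‖p.2‖ ≠ 0 := norm_ne_zero_iff.2 hp
  simp only [rotCoeffDeriv]
  rw [← Finset.sum_div, sum_rotGen_deriv, divPi]
  simp only [map_smul, real_inner_smul_left, real_inner_smul_right]
  field_simp

lemma divPi_eq_zero {p : EN × E3} (hp : p ∉ tsupport Ψ) : divPi N Ψ p.1 p.2 = 0 := by
  have h0 : Ψ p = 0 := image_eq_zero_of_notMem_tsupport hp
  have h1 : (fun w => Ψ (p.1, w)) =ᶠ[𝓝 p.2] fun _ => 0 := by
    have h2 : ∀ᶠ q in 𝓝 p, Ψ q = 0 := notMem_tsupport_iff_eventuallyEq.1 hp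
    have h3 : Tendsto (fun w => (p.1, w)) (𝓝 p.2) (𝓝 p) :=
      (Continuous.prodMk_right p.1).tendsto p.2
    exact h3.eventually h2
  have h2 : fderiv ℝ (fun w => Ψ (p.1, w)) p.2 = 0 := by
    rw [h1.fderiv_eq]
    simp
  simp [divPi, h0, h2]

end TestFunctions

/-! ### The square root -/

/-- If `0 < F ∈ L¹_loc` has weak projection gradient `D ∈ L¹_loc` in
`z ≠ 0`, is locally bounded below by positive constants, and `F(y,z)/|z| ∈ L¹_loc`, then
`√F` has weak projection gradient `D/(2√F)` in `z ≠ 0`. -/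
theorem stmt19 (N : ℕ) (Y : Set (EuclideanSpace ℝ (Fin N))) (hY : MeasurableSet Y)
    (F : EuclideanSpace ℝ (Fin N) × E3 → ℝ) (D : EuclideanSpace ℝ (Fin N) × E3 → E3)
    (hFmeas : Measurable F) (hDmeas : Measurable D)
    (hFpos : ∀ y ∈ Y, ∀ z : E3, 0 < F (y, z))
    (hFloc : ∀ R : ℝ, 0 < R →
      IntegrableOn F ((Y ×ˢ (Set.univ : Set E3)) ∩ Metric.closedBall 0 R) volume)
    (hDloc : ∀ R : ℝ, 0 < R →
      IntegrableOn (fun p => ‖D p‖) ((Y ×ˢ (Set.univ : Set E3)) ∩ Metric.closedBall 0 R)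
        volume)
    (hinf : ∀ R₁ R₂ : ℝ, 0 < R₁ → 0 < R₂ → ∃ c : ℝ, 0 < c ∧
      ∀ y ∈ Y, ‖y‖ ≤ R₁ → ∀ z : E3, ‖z‖ ≤ R₂ → c ≤ F (y, z))
    (hFz : ∀ R : ℝ, 0 < R →
      IntegrableOn (fun p => F p / ‖p.2‖)
        ((Y ×ˢ (Set.univ : Set E3)) ∩ Metric.closedBall 0 R) volume)
    (hperp : ∀ᵐ p ∂(volume.restrict (Y ×ˢ (Set.univ : Set E3))), ⟪D p, p.2⟫ = 0)
    (hweak : ∀ Ψ, TestC N Ψ →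
      (∫ p in Y ×ˢ (Set.univ : Set E3), ⟪Ψ p, D p⟫) =
        -∫ p in Y ×ˢ (Set.univ : Set E3), F p * divPi N Ψ p.1 p.2) :
    ∀ Ψ, TestC N Ψ →
      (∫ p in Y ×ˢ (Set.univ : Set E3), ⟪Ψ p, (2 * Real.sqrt (F p))⁻¹ • D p⟫) =
        -∫ p in Y ×ˢ (Set.univ : Set E3), Real.sqrt (F p) * divPi N Ψ p.1 p.2 := by
  intro Ψ hΨ
  obtain ⟨C, hC⟩ := hΨ.2.2.2.2
  obtain ⟨R, hR, hsupp⟩ := hΨ.2.1.isCompact.isBounded.subset_ball_lt 0 0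
  have hS : MeasurableSet ((Y ×ˢ (Set.univ : Set E3)) ∩
      Metric.ball (0 : EuclideanSpace ℝ (Fin N) × E3) R) :=
    (hY.prod MeasurableSet.univ).inter Metric.isOpen_ball.measurableSet
  have hsub : (Y ×ˢ (Set.univ : Set E3)) ∩ Metric.ball (0 : EuclideanSpace ℝ (Fin N) × E3) R ⊆
      (Y ×ˢ (Set.univ : Set E3)) ∩ Metric.closedBall 0 R :=
    Set.inter_subset_inter_right _ Metric.ball_subset_closedBall
  have hmem : ∀ᵐ p ∂(cylMeasure Y R), p ∈ (Y ×ˢ (Set.univ : Set E3)) ∩ Metric.ball 0 R :=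
    ae_restrict_mem hS
  have hFi : Integrable F (cylMeasure Y R) := (hFloc R hR).mono_set hsub
  have hDi : Integrable (fun p => ‖D p‖) (cylMeasure Y R) := (hDloc R hR).mono_set hsub
  have hgm : ∀ k, Measurable fun p => ⟪D p, rotGen k p.2⟫ := fun k =>
    hDmeas.inner ((rotGen k).measurable.comp measurable_snd)
  have hgi : ∀ k, Integrable (fun p => ⟪D p, rotGen k p.2⟫) (cylMeasure Y R) := by
    intro k
    refine Integrable.mono' (hDi.mul_const (‖rotGen k‖ * R)) (hgm k).aestronglyMeasurable ?_
    filter_upwards [hmem] with p hp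
    refine (norm_inner_le_norm _ _).trans ?_
    have h1 : ‖p.2‖ ≤ R := (norm_snd_le p).trans (mem_ball_zero_iff.1 hp.2).le
    gcongr
    exact (rotGen k).le_opNorm_of_le h1
  obtain ⟨c, hc, hcF⟩ := hinf R R hR hR
  have hFc : ∀ᵐ p ∂(cylMeasure Y R), c ≤ F p := by
    filter_upwards [hmem] with p hp
    have h1 := (mem_ball_zero_iff.1 hp.2).le
    exact hcF p.1 hp.1.1 ((norm_fst_le p).trans h1) p.2 ((norm_snd_le p).trans h1)
  have hz : ∀ᵐ p ∂(cylMeasure Y R), p.2 ≠ 0 := by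
    refine ae_restrict_of_ae ?_
    have h1 : ∀ᵐ z : E3, z ≠ 0 := by simp [ae_iff]
    exact Measure.quasiMeasurePreserving_snd.ae h1
  have hperp' : ∀ᵐ p ∂(cylMeasure Y R), ⟪D p, p.2⟫ = 0 :=
    ae_restrict_of_ae_restrict_of_subset Set.inter_subset_left hperp
  have hchain := fun k => MPFlow.sqrt_chain (mpFlow_rotFlow (isSkew_rotGen k) hY R) hFmeas hFi
    (hgm k) (hgi k) (hasFlowDeriv_rot hY hFmeas hDmeas hweak (isSkew_rotGen k) hFi (hgi k)) hc hFc
    (φ := rotCoeff (rotGen k) Ψ) (φ' := rotCoeffDeriv (rotGen k) Ψ)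
    ((hΨ.1.measurable.inner ((rotGen k).measurable.comp measurable_snd)).div
      (measurable_snd.norm.pow_const 2))
    (abs_rotCoeff_le hΨ hC) (rotCoeff_lipschitz hΨ hC (isSkew_rotGen k))
    (fun p => by
      have h0 : rotFlow N (rotGen k) 0 p = p := (mpFlow_rotFlow (isSkew_rotGen k) hY R).zero p
      simpa only [h0] using hasDerivAt_rotCoeff hΨ (isSkew_rotGen k) 0 p)
  rw [setIntegral_eq_cylMeasure (R := R) hY, setIntegral_eq_cylMeasure (R := R) hY]
  · calc ∫ p, ⟪Ψ p, (2 * Real.sqrt (F p))⁻¹ • D p⟫ ∂(cylMeasure Y R)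
        = ∫ p, ∑ k, rotCoeff (rotGen k) Ψ p * (2 * Real.sqrt (F p))⁻¹ * ⟪D p, rotGen k p.2⟫
            ∂(cylMeasure Y R) := by
          refine integral_congr_ae ?_
          filter_upwards [hz, hperp'] with p h1 h2
          rw [real_inner_smul_right, ← sum_rotCoeff_mul Ψ p h1 h2, Finset.mul_sum]
          exact Finset.sum_congr rfl fun k _ => by ring
      _ = -∫ p, ∑ k, Real.sqrt (F p) * rotCoeffDeriv (rotGen k) Ψ p ∂(cylMeasure Y R) := by
          rw [integral_finsetSum _ fun k _ => (hchain k).1,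
            integral_finsetSum _ fun k _ => (hchain k).2.1, ← Finset.sum_neg_distrib]
          exact Finset.sum_congr rfl fun k _ => (hchain k).2.2
      _ = -∫ p, Real.sqrt (F p) * divPi N Ψ p.1 p.2 ∂(cylMeasure Y R) := by
          congr 1
          refine integral_congr_ae ?_
          filter_upwards [hz] with p h1
          rw [← sum_rotCoeffDeriv Ψ p h1, Finset.mul_sum]
  · intro p hp
    rw [divPi_eq_zero fun h => hp (hsupp h), mul_zero]
  · intro p hp
    rw [image_eq_zero_of_notMem_tsupport fun h => hp (hsupp h), inner_zero_left]

end
end
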